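/- arXiv:1006.1306 — 3 statements merged into one kernel-verified Lean document; each statement's English description precedes it below -/
import Mathlib

section
/- Let Y be a subvariety of P^{q−1} over ℂ of dimension n and degree Δ. Let c⃗ = (c_1,…,c_q) be a tuple of positive reals, and let {i_0,…,i_n} be a subset of {1,…,q} such that Y ∩ {y_{i_0} = 0, …, y_{i_n} = 0} = ∅. Then e_Y(c⃗) ≥ (c_{i_0} + … + c_{i_n})·Δ. -/
open scoped BigOperators

noncomputable section

variable {k : ℕ}

/-- The image of the space of homogeneous polynomials of degree `m` in the homogeneous
coordinate ring `ℂ[y]/I`: the degree-`m` graded piece of the coordinate ring of the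
projective variety with homogeneous ideal `I`. -/
def gradedPiece (I : Ideal (MvPolynomial (Fin k) ℂ)) (m : ℕ) :
    Submodule ℂ (MvPolynomial (Fin k) ℂ ⧸ Submodule.restrictScalars ℂ I) :=
  Submodule.map (Submodule.restrictScalars ℂ I).mkQ
    (MvPolynomial.homogeneousSubmodule (Fin k) ℂ m)

/-- The Hilbert function `H_X(m) = dim_ℂ ℂ[y]_m/(I_X)_m` of the projective variety
`X ⊂ ℙ^{k-1}` with homogeneous ideal `I = I_X`. -/
def hilbertFn (I : Ideal (MvPolynomial (Fin k) ℂ)) (m : ℕ) : ℕ :=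
  Module.finrank ℂ (gradedPiece I m)

/-- `A` is a set of exponent vectors of monomials of degree `m` whose residue classes
modulo `I` form a basis of `ℂ[y]_m/(I)_m`. -/
def IsMonomialBasis (I : Ideal (MvPolynomial (Fin k) ℂ)) (m : ℕ)
    (A : Finset (Fin k →₀ ℕ)) : Prop :=
  (∀ a ∈ A, (∑ i, a i) = m) ∧
  LinearIndependent (ι := (A : Set (Fin k →₀ ℕ))) ℂ
    (fun a => (Submodule.restrictScalars ℂ I).mkQ (MvPolynomial.monomial a.1 (1 : ℂ))) ∧
  Submodule.span ℂ
      ((fun a => (Submodule.restrictScalars ℂ I).mkQ (MvPolynomial.monomial a (1 : ℂ))) '' A)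
    = gradedPiece I m

/-- The `m`-th Hilbert weight of the variety with homogeneous ideal `I` with respect to
the weight vector `c`:
`S_X(m, c⃗) = max Σ_{i=1}^{H_X(m)} a⃗^{(i)}·c⃗`, the maximum being over all sets of
monomials `y^{a⃗^{(1)}},…,y^{a⃗^{(H_X(m))}}` whose residue classes modulo `I` form a
basis of `ℂ[y]_m/(I)_m`. -/
def hilbertWeight (I : Ideal (MvPolynomial (Fin k) ℂ)) (m : ℕ) (c : Fin k → ℝ) : ℝ :=
  sSup {s : ℝ | ∃ A : Finset (Fin k →₀ ℕ), IsMonomialBasis I m A ∧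
    s = ∑ a ∈ A, ∑ i, (a i : ℝ) * c i}

end

namespace ChowAux

open Filter

/-- residue class of a monomial -/
noncomputable def mon {q : ℕ} (I : Ideal (MvPolynomial (Fin q) ℂ)) (a : Fin q →₀ ℕ) :
    MvPolynomial (Fin q) ℂ ⧸ Submodule.restrictScalars ℂ I :=
  (Submodule.restrictScalars ℂ I).mkQ (MvPolynomial.monomial a (1 : ℂ))

/-- multiplication by a monomial on the coordinate ring -/
noncomputable def shiftMap {q : ℕ} (I : Ideal (MvPolynomial (Fin q) ℂ)) (c : Fin q →₀ ℕ) :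
    (MvPolynomial (Fin q) ℂ ⧸ Submodule.restrictScalars ℂ I) →ₗ[ℂ]
    (MvPolynomial (Fin q) ℂ ⧸ Submodule.restrictScalars ℂ I) :=
  Submodule.mapQ _ _ (LinearMap.mulLeft ℂ (MvPolynomial.monomial c (1 : ℂ))) (by
    intro p hp
    exact I.mul_mem_left _ hp)

theorem shiftMap_mkQ {q : ℕ} (I : Ideal (MvPolynomial (Fin q) ℂ)) (c : Fin q →₀ ℕ)
    (p : MvPolynomial (Fin q) ℂ) :
    shiftMap I c ((Submodule.restrictScalars ℂ I).mkQ p) =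
      (Submodule.restrictScalars ℂ I).mkQ (MvPolynomial.monomial c (1 : ℂ) * p) := rfl

theorem shiftMap_mon {q : ℕ} (I : Ideal (MvPolynomial (Fin q) ℂ)) (c a : Fin q →₀ ℕ) :
    shiftMap I c (mon I a) = mon I (c + a) := by
  rw [mon, shiftMap_mkQ, MvPolynomial.monomial_mul, one_mul, mon]

theorem greedy {ι V L : Type*} [AddCommGroup V] [Module ℂ V] [LinearOrder L] [DecidableEq ι]
    (k : ι → L) (hk : Function.Injective k) (v : ι → V) (X : Finset ι) :
    LinearIndepOn ℂ v {x | x ∈ X ∧ v x ∉ Submodule.span ℂ (v '' {y | y ∈ X ∧ k y < k x})} ∧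
    Submodule.span ℂ
      (v '' {x | x ∈ X ∧ v x ∉ Submodule.span ℂ (v '' {y | y ∈ X ∧ k y < k x})}) =
      Submodule.span ℂ (v '' X) := by
  induction X using Finset.induction_on_max_value k with
  | empty => simp
  | insert a X ha hmax ih =>
    obtain ⟨ih1, ih2⟩ := ih
    have hlt : ∀ x ∈ X, k x < k a := fun x hx =>
      lt_of_le_of_ne (hmax x hx) (fun h => ha (hk h ▸ hx))
    have e1 : ∀ x ∈ X, {y | y ∈ insert a X ∧ k y < k x} = {y | y ∈ X ∧ k y < k x} := by
      intro x hx
      ext y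
      simp only [Finset.mem_insert, Set.mem_ofPred_eq]
      constructor
      · rintro ⟨rfl | h, h2⟩
        · exact absurd h2 (not_lt.2 (hmax x hx))
        · exact ⟨h, h2⟩
      · rintro ⟨h, h2⟩
        exact ⟨Or.inr h, h2⟩
    have e2 : {y | y ∈ insert a X ∧ k y < k a} = (X : Set ι) := by
      ext y
      simp only [Finset.mem_insert, Set.mem_ofPred_eq, Finset.mem_coe]
      constructor
      · rintro ⟨rfl | h, h2⟩
        · exact absurd h2 (lt_irrefl _)
        · exact h
      · intro h
        exact ⟨Or.inr h, hlt y h⟩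
    set B := {x | x ∈ X ∧ v x ∉ Submodule.span ℂ (v '' {y | y ∈ X ∧ k y < k x})} with hB
    by_cases hmem : v a ∈ Submodule.span ℂ (v '' (X : Set ι))
    · have e3 : {x | x ∈ insert a X ∧
          v x ∉ Submodule.span ℂ (v '' {y | y ∈ insert a X ∧ k y < k x})} = B := by
        ext x
        simp only [Finset.mem_insert, Set.mem_ofPred_eq, hB]
        constructor
        · rintro ⟨rfl | h, h2⟩
          · exact absurd hmem (by rw [← e2]; simpa using h2)
          · refine ⟨h, ?_⟩
            rw [← e1 x h]; simpa using h2
        · rintro ⟨h, h2⟩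
          refine ⟨Or.inr h, ?_⟩
          rw [← e1 x h] at h2; simpa using h2
      rw [e3]
      refine ⟨ih1, ?_⟩
      rw [ih2, Finset.coe_insert, Set.image_insert_eq, Submodule.span_insert_eq_span hmem]
    · have e3 : {x | x ∈ insert a X ∧
          v x ∉ Submodule.span ℂ (v '' {y | y ∈ insert a X ∧ k y < k x})} = insert a B := by
        ext x
        simp only [Finset.mem_insert, Set.mem_ofPred_eq, hB, Set.mem_insert_iff]
        constructor
        · rintro ⟨rfl | h, h2⟩
          · exact Or.inl rfl
          · refine Or.inr ⟨h, ?_⟩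
            rw [← e1 x h]; simpa using h2
        · rintro (rfl | ⟨h, h2⟩)
          · refine ⟨Or.inl rfl, ?_⟩
            rw [← e2] at hmem; simpa using hmem
          · refine ⟨Or.inr h, ?_⟩
            rw [← e1 x h] at h2; simpa using h2
      rw [e3]
      refine ⟨?_, ?_⟩
      · apply LinearIndepOn.insert ih1
        rwa [ih2]
      · rw [Set.image_insert_eq, Submodule.span_insert, ih2, Finset.coe_insert,
          Set.image_insert_eq, Submodule.span_insert]

theorem nullst {q : ℕ} (I : Ideal (MvPolynomial (Fin q) ℂ))
    (hIhom : ∀ p ∈ I, ∀ j : ℕ, MvPolynomial.homogeneousComponent j p ∈ I)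
    (s : Finset (Fin q))
    (hempty : ∀ x : Fin q → ℂ, (∀ p ∈ I, MvPolynomial.eval x p = 0) →
      (∀ j ∈ s, x j = 0) → x = 0) (i : Fin q) :
    ∃ N : ℕ, ∃ h : MvPolynomial (Fin q) ℂ, h.IsHomogeneous N ∧
      MvPolynomial.X i ^ N - h ∈ I ∧ ∀ a ∈ h.support, ∃ j ∈ s, a j ≠ 0 := by
  have h1 : (MvPolynomial.X i : MvPolynomial (Fin q) ℂ) ∈
      (I ⊔ Ideal.span (MvPolynomial.X '' (s : Set (Fin q)))).radical := by
    rw [← MvPolynomial.vanishingIdeal_zeroLocus_eq_radical (K := ℂ)]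
    intro x hx
    have : x = 0 := by
      apply hempty
      · intro p hp
        simpa [MvPolynomial.aeval_eq_eval] using hx p (Ideal.mem_sup_left hp)
      · intro j hj
        have := hx (MvPolynomial.X j)
          (Ideal.mem_sup_right (Ideal.subset_span ⟨j, hj, rfl⟩))
        simpa using this
    simp [this]
  obtain ⟨N, hN⟩ := h1
  obtain ⟨g, hg, h, hh, hgh⟩ := Submodule.mem_sup.1 hN
  refine ⟨N, MvPolynomial.homogeneousComponent N h,
    MvPolynomial.homogeneousComponent_isHomogeneous N h, ?_, ?_⟩
  · have h2 : MvPolynomial.homogeneousComponent N (MvPolynomial.X i ^ N) =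
        (MvPolynomial.X i ^ N : MvPolynomial (Fin q) ℂ) := by
      rw [MvPolynomial.homogeneousComponent_of_mem
        (m := N) (n := N) (by exact MvPolynomial.isHomogeneous_X_pow i N)]
      simp
    have h3 := hIhom g hg N
    have : g = MvPolynomial.X i ^ N - h := by rw [← hgh]; ring
    rw [this, map_sub, h2] at h3
    exact h3
  · intro a ha
    rw [MvPolynomial.mem_ideal_span_X_image] at hh
    apply hh
    rw [MvPolynomial.mem_support_iff, MvPolynomial.coeff_homogeneousComponent] at ha
    rw [MvPolynomial.mem_support_iff]
    intro h0
    simp [h0] at ha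

/-- exponents bounded by `N` -/
theorem spanning {q : ℕ} (I : Ideal (MvPolynomial (Fin q) ℂ))
    (hIhom : ∀ p ∈ I, ∀ j : ℕ, MvPolynomial.homogeneousComponent j p ∈ I)
    (s : Finset (Fin q))
    (hempty : ∀ x : Fin q → ℂ, (∀ p ∈ I, MvPolynomial.eval x p = 0) →
      (∀ j ∈ s, x j = 0) → x = 0) :
    ∃ W : Finset (Fin q →₀ ℕ), ∀ m : ℕ, ∀ b : Fin q →₀ ℕ, b.degree = m →
      mon I b ∈ Submodule.span ℂ ((fun p : (Fin q →₀ ℕ) × (Fin q →₀ ℕ) => mon I (p.1 + p.2)) ''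
        {p | p.1.support ⊆ s ∧ p.2 ∈ W ∧ p.1.degree + p.2.degree = m}) := by
  choose N h hh hI hs using nullst I hIhom s hempty
  refine ⟨Finset.Iic (Finsupp.equivFunOnFinite.symm N), ?_⟩
  intro m
  induction m with
  | zero =>
    intro b hb
    have hb0 : b = 0 := (Finsupp.degree_eq_zero_iff b).1 hb
    subst hb0
    apply Submodule.subset_span
    exact ⟨(0, 0), by simp, by simp⟩
  | succ m ih =>
    -- monomials divisible by a variable from s
    have key : ∀ b : Fin q →₀ ℕ, b.degree = m + 1 → (∃ j ∈ s, b j ≠ 0) →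
      mon I b ∈ Submodule.span ℂ ((fun p : (Fin q →₀ ℕ) × (Fin q →₀ ℕ) => mon I (p.1 + p.2)) ''
        {p | p.1.support ⊆ s ∧ p.2 ∈ Finset.Iic (Finsupp.equivFunOnFinite.symm N) ∧
          p.1.degree + p.2.degree = m + 1}) := by
      rintro b hb ⟨j, hj, hbj⟩
      have hle : Finsupp.single j 1 ≤ b := by
        rw [Finsupp.single_le_iff]; omega
      obtain ⟨b', rfl⟩ := exists_add_of_le hle
      have hd : b'.degree = m := by
        rw [map_add, Finsupp.degree_single] at hb; omega
      have h1 := Submodule.mem_map_of_mem (f := shiftMap I (Finsupp.single j 1)) (ih b' hd)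
      rw [shiftMap_mon, Submodule.map_span] at h1
      refine Submodule.span_mono ?_ h1
      rintro _ ⟨_, ⟨p, ⟨hp1, hp2, hp3⟩, rfl⟩, rfl⟩
      refine ⟨(Finsupp.single j 1 + p.1, p.2), ⟨?_, hp2, ?_⟩, ?_⟩
      · refine Finsupp.support_add.trans (Finset.union_subset ?_ hp1)
        refine Finsupp.support_single_subset.trans ?_
        simpa using hj
      · simp only [map_add, Finsupp.degree_single]; omega
      · simp only [shiftMap_mon, add_assoc]
    intro b hb
    by_cases hbs : ∃ j ∈ s, b j ≠ 0
    · exact key b hb hbs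
    by_cases hbN : ∀ i, b i ≤ N i
    · apply Submodule.subset_span
      refine ⟨(0, b), ⟨by simp, ?_, by simpa using hb⟩, by simp⟩
      rw [Finset.mem_Iic]
      intro i
      simpa using hbN i
    · push Not at hbN
      obtain ⟨i, hi⟩ := hbN
      have hle : Finsupp.single i (N i) ≤ b := by
        rw [Finsupp.single_le_iff]; omega
      obtain ⟨b', rfl⟩ := exists_add_of_le hle
      have e1 : mon I (Finsupp.single i (N i) + b') =
          (Submodule.restrictScalars ℂ I).mkQ (MvPolynomial.monomial b' (1 : ℂ) * h i) := by
        rw [mon, ← sub_eq_zero, ← map_sub]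
        rw [Submodule.mkQ_apply, Submodule.Quotient.mk_eq_zero]
        have := I.mul_mem_left (MvPolynomial.monomial b' (1 : ℂ)) (hI i)
        rw [mul_sub, MvPolynomial.X_pow_eq_monomial, MvPolynomial.monomial_mul, one_mul,
          add_comm] at this
        exact this
      rw [e1, ← shiftMap_mkQ, (h i).as_sum, map_sum, map_sum]
      apply Submodule.sum_mem
      intro a ha
      have e2 : (Submodule.restrictScalars ℂ I).mkQ
          (MvPolynomial.monomial a (MvPolynomial.coeff a (h i))) =
          MvPolynomial.coeff a (h i) • mon I a := by
        rw [mon, ← map_smul, MvPolynomial.smul_monomial, smul_eq_mul, mul_one]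
      rw [e2, map_smul, shiftMap_mon]
      apply Submodule.smul_mem
      apply key
      · have hda : a.degree = N i := by
          have := hh i (MvPolynomial.mem_support_iff.1 ha)
          rwa [Finsupp.degree_eq_weight_one]
        rw [map_add, Finsupp.degree_single] at hb
        rw [map_add]
        omega
      · obtain ⟨j, hj, hj2⟩ := hs i a ha
        exact ⟨j, hj, by rw [Finsupp.add_apply]; omega⟩

section structureSec

variable {q : ℕ}

open Classical in
/-- index set of degree `m` -/
noncomputable def XX (s : Finset (Fin q)) (W : Finset (Fin q →₀ ℕ)) (m : ℕ) :
    Finset ((Fin q →₀ ℕ) × (Fin q →₀ ℕ)) :=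
  (((Finset.range (m + 1)).biUnion (fun d => Finset.finsuppAntidiag s d)) ×ˢ W).filter
    (fun p => p.1.degree + p.2.degree = m)

theorem mem_antidiag (s : Finset (Fin q)) (d : ℕ) (a : Fin q →₀ ℕ) :
    a ∈ Finset.finsuppAntidiag s d ↔ a.degree = d ∧ a.support ⊆ s := by
  rw [Finset.mem_finsuppAntidiag']
  rfl

theorem mem_XX (s : Finset (Fin q)) (W : Finset (Fin q →₀ ℕ)) (m : ℕ)
    (p : (Fin q →₀ ℕ) × (Fin q →₀ ℕ)) :
    p ∈ XX s W m ↔ p.1.support ⊆ s ∧ p.2 ∈ W ∧ p.1.degree + p.2.degree = m := by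
  simp only [XX, Finset.mem_filter, Finset.mem_product, Finset.mem_biUnion, mem_antidiag,
    Finset.mem_range]
  constructor
  · rintro ⟨⟨⟨d, -, -, h1⟩, h2⟩, h3⟩
    exact ⟨h1, h2, h3⟩
  · rintro ⟨h1, h2, h3⟩
    exact ⟨⟨⟨_, by omega, rfl, h1⟩, h2⟩, h3⟩

/-- ordering key -/
def key (p : (Fin q →₀ ℕ) × (Fin q →₀ ℕ)) : Lex (Lex (Fin q →₀ ℕ) × Lex (Fin q →₀ ℕ)) :=
  toLex (toLex p.1, toLex p.2)

theorem key_inj : Function.Injective (key (q := q)) := by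
  rintro ⟨a, b⟩ ⟨c, d⟩ h
  simpa [key] using h

theorem key_lt (p p' : (Fin q →₀ ℕ) × (Fin q →₀ ℕ)) (c : Fin q →₀ ℕ) (h : key p < key p') :
    key (c + p.1, p.2) < key (c + p'.1, p'.2) := by
  simp only [key, Prod.Lex.toLex_lt_toLex] at h ⊢
  rcases h with h | ⟨h, h2⟩
  · left
    simp only [toLex_add]
    exact add_lt_add_right h _
  · right
    refine ⟨?_, h2⟩
    simp only [toLex_add] at h ⊢
    rw [h]

/-- residue class of the monomial attached to a pair -/
noncomputable def vv (I : Ideal (MvPolynomial (Fin q) ℂ)) (p : (Fin q →₀ ℕ) × (Fin q →₀ ℕ)) :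
    MvPolynomial (Fin q) ℂ ⧸ Submodule.restrictScalars ℂ I := mon I (p.1 + p.2)

/-- nonstandard pairs -/
def NS (I : Ideal (MvPolynomial (Fin q) ℂ)) (s : Finset (Fin q)) (W : Finset (Fin q →₀ ℕ))
    (p : (Fin q →₀ ℕ) × (Fin q →₀ ℕ)) : Prop :=
  vv I p ∈ Submodule.span ℂ
    (vv I '' {y | y ∈ XX s W (p.1.degree + p.2.degree) ∧ key y < key p})

theorem NS_add (I : Ideal (MvPolynomial (Fin q) ℂ)) (s : Finset (Fin q))
    (W : Finset (Fin q →₀ ℕ)) (p : (Fin q →₀ ℕ) × (Fin q →₀ ℕ)) (c : Fin q →₀ ℕ)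
    (hc : c.support ⊆ s) (h : NS I s W p) : NS I s W (c + p.1, p.2) := by
  unfold NS at h ⊢
  have h1 := Submodule.mem_map_of_mem (f := shiftMap I c) h
  rw [vv, shiftMap_mon, Submodule.map_span] at h1
  rw [vv, add_assoc]
  refine Submodule.span_mono ?_ h1
  rintro _ ⟨_, ⟨y, ⟨hy1, hy2⟩, rfl⟩, rfl⟩
  rw [mem_XX] at hy1
  refine ⟨(c + y.1, y.2), ⟨?_, key_lt _ _ _ hy2⟩, ?_⟩
  · rw [mem_XX]
    refine ⟨Finsupp.support_add.trans (Finset.union_subset hc hy1.1), hy1.2.1, ?_⟩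
    simp only [map_add]
    omega
  · rw [vv, vv, shiftMap_mon, add_assoc]

open Classical in
/-- standard pairs in degree `m` -/
noncomputable def BB (I : Ideal (MvPolynomial (Fin q) ℂ)) (s : Finset (Fin q))
    (W : Finset (Fin q →₀ ℕ)) (m : ℕ) : Finset ((Fin q →₀ ℕ) × (Fin q →₀ ℕ)) :=
  (XX s W m).filter (fun p => ¬ NS I s W p)

theorem gradedPiece_eq (I : Ideal (MvPolynomial (Fin q) ℂ)) (m : ℕ) :
    gradedPiece I m = Submodule.span ℂ (mon I '' {b | b.degree = m}) := by
  apply le_antisymm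
  · rintro _ ⟨p, hp, rfl⟩
    rw [p.as_sum, map_sum]
    apply Submodule.sum_mem
    intro a ha
    have e2 : (Submodule.restrictScalars ℂ I).mkQ
        (MvPolynomial.monomial a (MvPolynomial.coeff a p)) =
        MvPolynomial.coeff a p • mon I a := by
      rw [mon, ← map_smul, MvPolynomial.smul_monomial, smul_eq_mul, mul_one]
    rw [e2]
    apply Submodule.smul_mem
    apply Submodule.subset_span
    refine ⟨a, ?_, rfl⟩
    have := hp (MvPolynomial.mem_support_iff.1 ha)
    show a.degree = m
    rwa [Finsupp.degree_eq_weight_one]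
  · rw [Submodule.span_le]
    rintro _ ⟨b, hb, rfl⟩
    exact ⟨_, MvPolynomial.isHomogeneous_monomial _ hb, rfl⟩

theorem BB_spec (I : Ideal (MvPolynomial (Fin q) ℂ)) (s : Finset (Fin q))
    (W : Finset (Fin q →₀ ℕ)) (m : ℕ)
    (hW : ∀ b : Fin q →₀ ℕ, b.degree = m →
      mon I b ∈ Submodule.span ℂ ((fun p : (Fin q →₀ ℕ) × (Fin q →₀ ℕ) => mon I (p.1 + p.2)) ''
        {p | p.1.support ⊆ s ∧ p.2 ∈ W ∧ p.1.degree + p.2.degree = m})) :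
    LinearIndepOn ℂ (vv I) (BB I s W m : Set ((Fin q →₀ ℕ) × (Fin q →₀ ℕ))) ∧
    Submodule.span ℂ (vv I '' (BB I s W m : Set ((Fin q →₀ ℕ) × (Fin q →₀ ℕ)))) =
      gradedPiece I m := by
  classical
  have hg := greedy key key_inj (vv I) (XX s W m)
  have e : {x | x ∈ XX s W m ∧ vv I x ∉ Submodule.span ℂ
      (vv I '' {y | y ∈ XX s W m ∧ key y < key x})} =
      (BB I s W m : Set ((Fin q →₀ ℕ) × (Fin q →₀ ℕ))) := by
    ext x
    simp only [Set.mem_ofPred_eq, BB, Finset.coe_filter]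
    refine and_congr_right ?_
    intro hx
    rw [NS, ((mem_XX _ _ _ _).1 hx).2.2]
  rw [e] at hg
  refine ⟨hg.1, ?_⟩
  rw [hg.2, gradedPiece_eq]
  apply le_antisymm
  · rw [Submodule.span_le]
    rintro _ ⟨p, hp, rfl⟩
    apply Submodule.subset_span
    refine ⟨p.1 + p.2, ?_, rfl⟩
    show (p.1 + p.2).degree = m
    rw [map_add]
    exact ((mem_XX _ _ _ _).1 hp).2.2
  · rw [Submodule.span_le]
    rintro _ ⟨b, hb, rfl⟩
    refine Submodule.span_mono ?_ (hW b hb)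
    rintro _ ⟨p, hp, rfl⟩
    exact ⟨p, (mem_XX _ _ _ _).2 hp, rfl⟩

theorem hilbertFn_eq (I : Ideal (MvPolynomial (Fin q) ℂ)) (m : ℕ)
    (B : Finset ((Fin q →₀ ℕ) × (Fin q →₀ ℕ)))
    (h1 : LinearIndepOn ℂ (vv I) (B : Set ((Fin q →₀ ℕ) × (Fin q →₀ ℕ))))
    (h2 : Submodule.span ℂ (vv I '' (B : Set ((Fin q →₀ ℕ) × (Fin q →₀ ℕ)))) =
      gradedPiece I m) : hilbertFn I m = B.card := by
  rw [hilbertFn, ← h2]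
  have := finrank_span_eq_card (R := ℂ) h1
  rw [Set.image_eq_range]
  simpa using this

theorem hilbertWeight_ge (I : Ideal (MvPolynomial (Fin q) ℂ)) (m : ℕ)
    (B : Finset ((Fin q →₀ ℕ) × (Fin q →₀ ℕ)))
    (h1 : LinearIndepOn ℂ (vv I) (B : Set ((Fin q →₀ ℕ) × (Fin q →₀ ℕ))))
    (h2 : Submodule.span ℂ (vv I '' (B : Set ((Fin q →₀ ℕ) × (Fin q →₀ ℕ)))) =
      gradedPiece I m) (hB : ∀ p ∈ B, p.1.degree + p.2.degree = m)
    (c : Fin q → ℝ) (hc : ∀ i, 0 < c i) :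
    ∑ p ∈ B, ∑ i, (p.1 i : ℝ) * c i ≤ hilbertWeight I m c := by
  classical
  have hinj : Set.InjOn (fun p : (Fin q →₀ ℕ) × (Fin q →₀ ℕ) => p.1 + p.2)
      (B : Set ((Fin q →₀ ℕ) × (Fin q →₀ ℕ))) := by
    intro x hx y hy hxy
    apply h1.injOn hx hy
    simp only [vv]
    rw [show x.1 + x.2 = y.1 + y.2 from hxy]
  have hbasis : IsMonomialBasis I m (B.image (fun p => p.1 + p.2)) := by
    refine ⟨?_, ?_, ?_⟩
    · intro a ha
      obtain ⟨p, hp, rfl⟩ := Finset.mem_image.1 ha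
      rw [← Finsupp.degree_eq_sum, map_add]
      exact hB p hp
    · have : LinearIndepOn ℂ (mon I)
        ((fun p : (Fin q →₀ ℕ) × (Fin q →₀ ℕ) => p.1 + p.2) '' B) := by
        apply LinearIndepOn.image_of_comp
        exact h1
      rw [← Finset.coe_image] at this
      exact this
    · rw [← h2, Finset.coe_image, Set.image_image]
      rfl
  have hbdd : BddAbove {x : ℝ | ∃ A : Finset (Fin q →₀ ℕ), IsMonomialBasis I m A ∧
      x = ∑ a ∈ A, ∑ i, (a i : ℝ) * c i} := by
    refine ⟨∑ a ∈ Finset.finsuppAntidiag Finset.univ m, ∑ i, (a i : ℝ) * c i, ?_⟩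
    rintro _ ⟨A, hA, rfl⟩
    apply Finset.sum_le_sum_of_subset_of_nonneg
    · intro a ha
      rw [mem_antidiag, Finsupp.degree_eq_sum]
      exact ⟨hA.1 a ha, Finset.subset_univ _⟩
    · intro a _ _
      exact Finset.sum_nonneg fun i _ => mul_nonneg (Nat.cast_nonneg _) (hc i).le
  refine le_trans ?_ (le_csSup hbdd ⟨_, hbasis, rfl⟩)
  rw [Finset.sum_image hinj]
  apply Finset.sum_le_sum
  intro p _
  apply Finset.sum_le_sum
  intro i _
  apply mul_le_mul_of_nonneg_right _ (hc i).le
  rw [Finsupp.add_apply]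
  push_cast
  have : (0 : ℝ) ≤ p.2 i := Nat.cast_nonneg _
  linarith

theorem fiber_le (I : Ideal (MvPolynomial (Fin q) ℂ)) (s : Finset (Fin q))
    (W : Finset (Fin q →₀ ℕ)) (m : ℕ) (w : Fin q →₀ ℕ) :
    ((BB I s W m).filter (fun p => p.2 = w)).card ≤
      (Finset.finsuppAntidiag s (m - w.degree)).card := by
  classical
  apply Finset.card_le_card_of_injOn (fun p => p.1)
  · intro p hp
    simp only [Finset.coe_filter, Set.mem_ofPred_eq, BB, Finset.mem_filter, mem_XX] at hp
    obtain ⟨⟨⟨h1, h2, h3⟩, h4⟩, rfl⟩ := hp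
    simp only [Finset.mem_coe, mem_antidiag]
    exact ⟨by omega, h1⟩
  · rintro ⟨a, b⟩ hp ⟨a', b'⟩ hp' h
    simp only [Finset.coe_filter, Set.mem_ofPred_eq] at hp hp'
    simp only at h
    rw [Prod.mk.injEq]
    exact ⟨h, hp.2.trans hp'.2.symm⟩

theorem fiber_le_sub (I : Ideal (MvPolynomial (Fin q) ℂ)) (s : Finset (Fin q))
    (W : Finset (Fin q →₀ ℕ)) (m : ℕ) (w u : Fin q →₀ ℕ) (hu : u.support ⊆ s)
    (hNS : NS I s W (u, w)) (hm : w.degree + u.degree ≤ m) :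
    ((BB I s W m).filter (fun p => p.2 = w)).card +
      (Finset.finsuppAntidiag s (m - w.degree - u.degree)).card ≤
      (Finset.finsuppAntidiag s (m - w.degree)).card := by
  classical
  have hi1 : Function.Injective (fun a : Fin q →₀ ℕ => a + u) := add_left_injective u
  rw [← Finset.card_image_of_injective (Finset.finsuppAntidiag s (m - w.degree - u.degree)) hi1]
  have hi2 : Set.InjOn (fun p : (Fin q →₀ ℕ) × (Fin q →₀ ℕ) => p.1)
      ((BB I s W m).filter (fun p => p.2 = w)) := by
    rintro ⟨a, b⟩ hp ⟨a', b'⟩ hp' h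
    simp only [Finset.coe_filter, Set.mem_ofPred_eq] at hp hp'
    simp only at h
    rw [Prod.mk.injEq]
    exact ⟨h, hp.2.trans hp'.2.symm⟩
  rw [← Finset.card_image_of_injOn hi2, ← Finset.card_union_of_disjoint]
  · apply Finset.card_le_card
    apply Finset.union_subset
    · intro a ha
      obtain ⟨p, hp, rfl⟩ := Finset.mem_image.1 ha
      simp only [Finset.mem_filter, BB, mem_XX] at hp
      obtain ⟨⟨⟨h1, h2, h3⟩, h4⟩, rfl⟩ := hp
      rw [mem_antidiag]
      exact ⟨by omega, h1⟩
    · intro a ha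
      obtain ⟨b, hb, rfl⟩ := Finset.mem_image.1 ha
      rw [mem_antidiag] at hb ⊢
      refine ⟨?_, Finsupp.support_add.trans (Finset.union_subset hb.2 hu)⟩
      rw [map_add]
      omega
  · rw [Finset.disjoint_left]
    intro a ha hb
    obtain ⟨p, hp, rfl⟩ := Finset.mem_image.1 ha
    obtain ⟨b, hb, hbe⟩ := Finset.mem_image.1 hb
    simp only [Finset.mem_filter, BB, mem_XX] at hp
    obtain ⟨⟨⟨h1, h2, h3⟩, h4⟩, rfl⟩ := hp
    apply h4
    have := NS_add I s W (u, p.2) b ((mem_antidiag _ _ _).1 hb).2 hNS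
    simp only at this hbe
    rw [hbe] at this
    exact this

theorem weight_ge (I : Ideal (MvPolynomial (Fin q) ℂ)) (s : Finset (Fin q))
    (W E : Finset (Fin q →₀ ℕ)) (hE : ∀ w ∈ E, w ∈ W ∧ ∀ a : Fin q →₀ ℕ, a.support ⊆ s →
      ¬ NS I s W (a, w)) (m : ℕ) (hm : ∀ w ∈ E, w.degree ≤ m)
    (c : Fin q → ℝ) (hc : ∀ i, 0 < c i) :
    ∑ w ∈ E, ∑ a ∈ Finset.finsuppAntidiag s (m - w.degree), ∑ i, (a i : ℝ) * c i ≤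
      ∑ p ∈ BB I s W m, ∑ i, (p.1 i : ℝ) * c i := by
  classical
  rw [Finset.sum_sigma']
  have hinj : Function.Injective (fun x : (_ : Fin q →₀ ℕ) × (Fin q →₀ ℕ) => (x.2, x.1)) := by
    rintro ⟨a, b⟩ ⟨c, d⟩ h
    simp only [Prod.mk.injEq] at h
    obtain ⟨rfl, rfl⟩ := h
    rfl
  rw [← Finset.sum_image (f := fun p : (Fin q →₀ ℕ) × (Fin q →₀ ℕ) => ∑ i, (p.1 i : ℝ) * c i)
    (g := fun x : (_ : Fin q →₀ ℕ) × (Fin q →₀ ℕ) => (x.2, x.1)) hinj.injOn]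
  apply Finset.sum_le_sum_of_subset_of_nonneg
  · intro p hp
    obtain ⟨x, hx, rfl⟩ := Finset.mem_image.1 hp
    rw [Finset.mem_sigma, mem_antidiag] at hx
    obtain ⟨h1, h2, h3⟩ := hx
    simp only [BB, Finset.mem_filter, mem_XX]
    have := hm _ h1
    exact ⟨⟨h3, (hE _ h1).1, by omega⟩, (hE _ h1).2 _ h3⟩
  · intro a _ _
    exact Finset.sum_nonneg fun i _ => mul_nonneg (Nat.cast_nonneg _) (hc i).le

theorem sum_coord_eq (s : Finset (Fin q)) (d : ℕ) (i j : Fin q) (hi : i ∈ s) (hj : j ∈ s) :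
    ∑ a ∈ Finset.finsuppAntidiag s d, (a i : ℝ) = ∑ a ∈ Finset.finsuppAntidiag s d, (a j : ℝ) := by
  classical
  have hmem : ∀ a ∈ Finset.finsuppAntidiag s d,
      Finsupp.equivMapDomain (Equiv.swap i j) a ∈ Finset.finsuppAntidiag s d := by
    intro a ha
    rw [Finset.mem_finsuppAntidiag] at ha
    rw [mem_antidiag]
    have h0 := (mem_antidiag s d a).1 ((Finset.mem_finsuppAntidiag).2 ha)
    constructor
    · rw [← h0.1, Finsupp.degree_eq_sum, Finsupp.degree_eq_sum]
      simp only [Finsupp.equivMapDomain_apply]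
      exact Equiv.sum_comp (Equiv.swap i j).symm (fun k => a k)
    · intro k hk
      rw [Finsupp.mem_support_iff, Finsupp.equivMapDomain_apply, Equiv.symm_swap] at hk
      have hk2 := h0.2 (Finsupp.mem_support_iff.2 hk)
      by_cases h1 : k = i
      · rwa [h1]
      by_cases h2 : k = j
      · rwa [h2]
      rwa [Equiv.swap_apply_of_ne_of_ne h1 h2] at hk2
  apply Finset.sum_nbij' (Finsupp.equivMapDomain (Equiv.swap i j))
    (Finsupp.equivMapDomain (Equiv.swap i j)) hmem hmem
  · intro a _
    ext k
    simp [Finsupp.equivMapDomain_apply]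
  · intro a _
    ext k
    simp [Finsupp.equivMapDomain_apply]
  · intro a _
    simp [Finsupp.equivMapDomain_apply]

theorem sum_weights (s : Finset (Fin q)) (n d : ℕ) (hs : s.card = n + 1) (c : Fin q → ℝ) :
    ((n : ℝ) + 1) * ∑ a ∈ Finset.finsuppAntidiag s d, ∑ i, (a i : ℝ) * c i =
      (∑ j ∈ s, c j) * (d * (Finset.finsuppAntidiag s d).card) := by
  have h1 : ∀ j ∈ s, ((n : ℝ) + 1) * ∑ a ∈ Finset.finsuppAntidiag s d, (a j : ℝ) =
      d * (Finset.finsuppAntidiag s d).card := by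
    intro j hj
    have : ∑ i ∈ s, ∑ a ∈ Finset.finsuppAntidiag s d, (a i : ℝ) =
        ((n : ℝ) + 1) * ∑ a ∈ Finset.finsuppAntidiag s d, (a j : ℝ) := by
      rw [Finset.sum_congr rfl (fun i hi => sum_coord_eq s d i j hi hj), Finset.sum_const, hs]
      simp
    rw [← this, Finset.sum_comm]
    rw [Finset.sum_congr rfl (g := fun _ => (d : ℝ))]
    · simp [mul_comm]
    · intro a ha
      rw [Finset.mem_finsuppAntidiag] at ha
      rw [← Nat.cast_sum, ha.1]
  have h2 : ∑ a ∈ Finset.finsuppAntidiag s d, ∑ i, (a i : ℝ) * c i =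
      ∑ a ∈ Finset.finsuppAntidiag s d, ∑ i ∈ s, (a i : ℝ) * c i := by
    apply Finset.sum_congr rfl
    intro a ha
    symm
    apply Finset.sum_subset (Finset.subset_univ _)
    intro i _ hi
    have : a i = 0 := by
      by_contra h
      exact hi (((mem_antidiag _ _ _).1 ha).2 (Finsupp.mem_support_iff.2 h))
    simp [this]
  rw [h2, Finset.sum_comm, Finset.mul_sum, Finset.sum_mul]
  apply Finset.sum_congr rfl
  intro j hj
  rw [← Finset.sum_mul, ← h1 j hj]
  ring

theorem card_asymp (s : Finset (Fin q)) (n k : ℕ) (hs : s.card = n + 1) :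
    Tendsto (fun m : ℕ => (Nat.factorial n : ℝ) *
      ((Finset.finsuppAntidiag s (m - k)).card : ℝ) / (m : ℝ) ^ n) atTop (nhds 1) := by
  have hcard : ∀ d, (Finset.finsuppAntidiag s d).card * n.factorial = (d + 1).ascFactorial n := by
    intro d
    rw [Finset.card_finsuppAntidiag_nat_eq_choose, hs, Nat.ascFactorial_eq_factorial_mul_choose,
      mul_comm]
    congr 1
    rw [show n + 1 + d - 1 = d + n by omega, ← Nat.choose_symm_add]
  have hcast : ∀ d, (n.factorial : ℝ) * ((Finset.finsuppAntidiag s d).card : ℝ) =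
      ((d + 1).ascFactorial n : ℕ) := by
    intro d
    rw [← hcard d]; push_cast; ring
  have t1 : Tendsto (fun m : ℕ => ((1 : ℝ) - k / m) ^ n) atTop (nhds 1) := by
    have := ((tendsto_const_nhds (x := (1 : ℝ))).sub
      (tendsto_const_div_atTop_nhds_zero_nat (k : ℝ))).pow n
    simpa using this
  have t2 : Tendsto (fun m : ℕ => ((1 : ℝ) + n / m) ^ n) atTop (nhds 1) := by
    have := ((tendsto_const_nhds (x := (1 : ℝ))).add
      (tendsto_const_div_atTop_nhds_zero_nat (n : ℝ))).pow n
    simpa using this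
  refine tendsto_of_tendsto_of_tendsto_of_le_of_le' t1 t2 ?_ ?_
  · filter_upwards [eventually_ge_atTop (k + 1)] with m hm
    have hm0 : (0 : ℝ) < m := by exact_mod_cast (by omega : 0 < m)
    have hk : (k : ℝ) ≤ m := by exact_mod_cast (by omega : k ≤ m)
    rw [hcast, le_div_iff₀ (by positivity), ← mul_pow]
    have e : ((1 : ℝ) - k / m) * m = ((m - k : ℕ) : ℝ) := by
      rw [Nat.cast_sub (by omega)]
      field_simp
    rw [e]
    have := (Nat.pow_le_pow_left (Nat.le_succ (m - k)) n).trans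
      (Nat.pow_succ_le_ascFactorial (m - k + 1) n)
    exact_mod_cast this
  · filter_upwards [eventually_ge_atTop (k + 1)] with m hm
    have hm0 : (0 : ℝ) < m := by exact_mod_cast (by omega : 0 < m)
    rw [hcast, div_le_iff₀ (by positivity), ← mul_pow]
    have e : ((1 : ℝ) + n / m) * m = ((m + n : ℕ) : ℝ) := by
      push_cast
      field_simp
    rw [e]
    have := (Nat.ascFactorial_le_pow_add (m - k) n).trans
      (Nat.pow_le_pow_left (by omega : m - k + n ≤ m + n) n)
    exact_mod_cast this

theorem main (I : Ideal (MvPolynomial (Fin q) ℂ))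
    (hIhom : ∀ p ∈ I, ∀ j : ℕ, MvPolynomial.homogeneousComponent j p ∈ I)
    (n Δ : ℕ)
    (hHilb : Tendsto (fun m : ℕ => (Nat.factorial n : ℝ) * (hilbertFn I m : ℝ) / (m : ℝ) ^ n)
      atTop (nhds (Δ : ℝ)))
    (c : Fin q → ℝ) (hc : ∀ i, 0 < c i) (e : ℝ)
    (he : Tendsto (fun m : ℕ =>
        (Nat.factorial (n + 1) : ℝ) * hilbertWeight I m c / (m : ℝ) ^ (n + 1))
        atTop (nhds e))
    (s : Finset (Fin q)) (hs : s.card = n + 1)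
    (hempty : ∀ x : Fin q → ℂ, (∀ p ∈ I, MvPolynomial.eval x p = 0) →
      (∀ j ∈ s, x j = 0) → x = 0) :
    (∑ j ∈ s, c j) * (Δ : ℝ) ≤ e := by
  classical
  obtain ⟨W, hW⟩ := spanning I hIhom s hempty
  set E := W.filter (fun w => ∀ a : Fin q →₀ ℕ, a.support ⊆ s → ¬ NS I s W (a, w)) with hE
  have hB := fun m => BB_spec I s W m (hW m)
  -- a uniform choice of nonstandard exponents
  have hu : ∀ w : Fin q →₀ ℕ, ∃ u : Fin q →₀ ℕ, w ∈ W → w ∉ E →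
      u.support ⊆ s ∧ NS I s W (u, w) := by
    intro w
    by_cases h : w ∈ W ∧ w ∉ E
    · have h2 := h.2
      rw [hE, Finset.mem_filter, not_and] at h2
      have h3 := h2 h.1
      push Not at h3
      obtain ⟨u, hu1, hu2⟩ := h3
      exact ⟨u, fun _ _ => ⟨hu1, hu2⟩⟩
    · exact ⟨0, fun h1 h2 => absurd ⟨h1, h2⟩ h⟩
  choose u hu using hu
  have hcount : (Δ : ℝ) ≤ E.card := by
    have hlim : Tendsto (fun m : ℕ => ∑ w ∈ W, (if w ∈ E then
        (Nat.factorial n : ℝ) * ((Finset.finsuppAntidiag s (m - w.degree)).card : ℝ) / (m : ℝ) ^ n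
        else (Nat.factorial n : ℝ) *
          ((Finset.finsuppAntidiag s (m - w.degree)).card : ℝ) / (m : ℝ) ^ n -
          (Nat.factorial n : ℝ) *
          ((Finset.finsuppAntidiag s (m - (w.degree + (u w).degree))).card : ℝ) / (m : ℝ) ^ n))
        atTop (nhds (∑ w ∈ W, if w ∈ E then (1 : ℝ) else 0)) := by
      apply tendsto_finsetSum
      intro w _
      by_cases hw : w ∈ E
      · simp only [hw, if_true]
        exact card_asymp s n _ hs
      · simp only [hw, if_false]
        have := (card_asymp s n w.degree hs).sub (card_asymp s n (w.degree + (u w).degree) hs)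
        simpa using this
    have e1 : (∑ w ∈ W, if w ∈ E then (1 : ℝ) else 0) = E.card := by
      rw [Finset.sum_ite_mem, Finset.inter_eq_right.2 (Finset.filter_subset _ _), Finset.sum_const,
        nsmul_eq_mul, mul_one]
    rw [e1] at hlim
    refine le_of_tendsto_of_tendsto hHilb hlim ?_
    have hev : ∀ᶠ m : ℕ in atTop, ∀ w ∈ W, w.degree + (u w).degree ≤ m := by
      rw [Filter.eventually_all_finset]
      intro w _
      exact eventually_ge_atTop _
    filter_upwards [hev] with m hm
    have hf : hilbertFn I m = ∑ w ∈ W, ((BB I s W m).filter (fun p => p.2 = w)).card := by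
      rw [hilbertFn_eq I m _ (hB m).1 (hB m).2]
      apply Finset.card_eq_sum_card_fiberwise
      intro p hp
      simp only [BB, Finset.coe_filter, Set.mem_ofPred_eq, mem_XX] at hp
      exact hp.1.2.1
    rw [hf]
    push_cast
    rw [Finset.mul_sum, Finset.sum_div]
    apply Finset.sum_le_sum
    intro w hw
    by_cases hwE : w ∈ E
    · simp only [hwE, if_true]
      have := fiber_le I s W m w
      gcongr
    · simp only [hwE, if_false]
      obtain ⟨hu1, hu2⟩ := hu w hw hwE
      have := fiber_le_sub I s W m w (u w) hu1 hu2 (hm w hw)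
      rw [Nat.sub_sub] at this
      rw [← sub_div, ← mul_sub]
      have h2 : (((BB I s W m).filter (fun p => p.2 = w)).card : ℝ) ≤
        ((Finset.finsuppAntidiag s (m - w.degree)).card : ℝ) -
        ((Finset.finsuppAntidiag s (m - (w.degree + (u w).degree))).card : ℝ) := by
        rw [le_sub_iff_add_le]
        exact_mod_cast this
      gcongr
  have hlow : (∑ j ∈ s, c j) * (E.card : ℝ) ≤ e := by
    have hlim : Tendsto (fun m : ℕ => ∑ w ∈ E, (∑ j ∈ s, c j) * (((1 : ℝ) - w.degree / m) *
        ((Nat.factorial n : ℝ) *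
          ((Finset.finsuppAntidiag s (m - w.degree)).card : ℝ) / (m : ℝ) ^ n)))
        atTop (nhds (∑ w ∈ E, (∑ j ∈ s, c j) * (((1 : ℝ) - 0) * 1))) := by
      apply tendsto_finsetSum
      intro w _
      exact (((tendsto_const_nhds (x := (1 : ℝ))).sub
        (tendsto_const_div_atTop_nhds_zero_nat (w.degree : ℝ))).mul
          (card_asymp s n w.degree hs)).const_mul _
    have e1 : (∑ w ∈ E, (∑ j ∈ s, c j) * (((1 : ℝ) - 0) * 1)) = (∑ j ∈ s, c j) * (E.card : ℝ) := by
      rw [Finset.sum_const, nsmul_eq_mul]; ring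
    rw [e1] at hlim
    refine le_of_tendsto_of_tendsto hlim he ?_
    have hev : ∀ᶠ m : ℕ in atTop, ∀ w ∈ E, w.degree ≤ m := by
      rw [Filter.eventually_all_finset]
      intro w _
      exact eventually_ge_atTop _
    filter_upwards [hev, eventually_ge_atTop 1] with m hm hm1
    have hm0 : (0 : ℝ) < m := by exact_mod_cast hm1
    have h1 := hilbertWeight_ge I m _ (hB m).1 (hB m).2 (by
      intro p hp
      simp only [BB, Finset.mem_filter, mem_XX] at hp
      exact hp.1.2.2) c hc
    have h2 := weight_ge I s W E (by
      intro w hw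
      rw [hE, Finset.mem_filter] at hw
      exact hw) m hm c hc
    have h3 := h2.trans h1
    have h4 : (∑ w ∈ E, (∑ j ∈ s, c j) * (((1 : ℝ) - w.degree / m) *
        ((Nat.factorial n : ℝ) *
          ((Finset.finsuppAntidiag s (m - w.degree)).card : ℝ) / (m : ℝ) ^ n))) =
        (Nat.factorial (n + 1) : ℝ) * (∑ w ∈ E, ∑ a ∈ Finset.finsuppAntidiag s (m - w.degree),
          ∑ i, (a i : ℝ) * c i) / (m : ℝ) ^ (n + 1) := by
      rw [Finset.mul_sum, Finset.sum_div]
      apply Finset.sum_congr rfl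
      intro w hw
      have h5 := sum_weights s n (m - w.degree) hs c
      rw [Nat.cast_sub (hm w hw)] at h5
      rw [Nat.factorial_succ]
      push_cast
      rw [show ((n : ℝ) + 1) * (n.factorial : ℝ) *
        (∑ a ∈ Finset.finsuppAntidiag s (m - w.degree), ∑ i, (a i : ℝ) * c i) =
        (n.factorial : ℝ) * (((n : ℝ) + 1) *
        (∑ a ∈ Finset.finsuppAntidiag s (m - w.degree), ∑ i, (a i : ℝ) * c i)) by ring, h5]
      field_simp
      ring
    rw [h4]
    gcongr
  refine le_trans ?_ hlow
  exact mul_le_mul_of_nonneg_left hcount (Finset.sum_nonneg fun j _ => (hc j).le)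

end structureSec

end ChowAux

open Filter

/-- **Evertse–Ferretti; Lemma 3.3 in the paper.**
Let `Y` be a subvariety of `ℙ^{q−1}` over `ℂ` of dimension `n` and degree `Δ`, with
homogeneous prime ideal `I_Y`.  Let `c⃗ = (c_1,…,c_q)` be a tuple of positive reals,
and let `{i_0,…,i_n}` be a subset of `{1,…,q}` such that
`Y ∩ {y_{i_0} = 0, …, y_{i_n} = 0} = ∅` (no nonzero point of the affine cone of `Y`
has all the coordinates from the subset equal to `0`).  Then
`e_Y(c⃗) ≥ (c_{i_0} + … + c_{i_n})·Δ`.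

The dimension `n` and degree `Δ` are encoded by the asymptotics of the Hilbert
function, and the Chow weight `e_Y(c⃗)` is characterized by the asymptotics
`S_Y(m, c⃗) = e_Y(c⃗)·m^{n+1}/(n+1)! + O(m^n)` of the Hilbert weight. -/
theorem chow_weight_lower_bound
    (q : ℕ) (hq : 1 ≤ q) (I : Ideal (MvPolynomial (Fin q) ℂ))
    (hIhom : ∀ p ∈ I, ∀ j : ℕ, MvPolynomial.homogeneousComponent j p ∈ I)
    (hIprime : I.IsPrime)
    (n Δ : ℕ) (hΔ : 0 < Δ)
    (hHilb : Tendsto (fun m : ℕ => (Nat.factorial n : ℝ) * (hilbertFn I m : ℝ) / (m : ℝ) ^ n)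
      atTop (nhds (Δ : ℝ)))
    (e : (Fin q → ℝ) → ℝ)
    (he : ∀ c : Fin q → ℝ, (∀ i, 0 ≤ c i) →
      Tendsto (fun m : ℕ =>
        (Nat.factorial (n + 1) : ℝ) * hilbertWeight I m c / (m : ℝ) ^ (n + 1))
        atTop (nhds (e c)))
    (c : Fin q → ℝ) (hc : ∀ i, 0 < c i)
    (s : Finset (Fin q)) (hs : s.card = n + 1)
    (hempty : ∀ x : Fin q → ℂ, (∀ p ∈ I, MvPolynomial.eval x p = 0) →
      (∀ j ∈ s, x j = 0) → x = 0) :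
    (∑ j ∈ s, c j) * (Δ : ℝ) ≤ e c := by
  exact ChowAux.main I hIhom n Δ hHilb c hc (e c) (he c fun i => (hc i).le) s hs hempty
end

section
/- Let Y ⊂ P^{r−1} be a subvariety over ℂ of dimension q and degree Δ such that for every subset {i_0,…,i_q} ⊂ {1,…,r} of size q+1 one has Y ∩ {y_{i_0} = 0, …, y_{i_q} = 0} = ∅. Let c⃗ ∈ {0,1}^r be a vector with exactly q entries equal to 1. Then for every integer N > Δ: S_Y(N, c⃗) ≥ (q/(q+1))·N·H_Y(N) − (2q+1)·Δ·H_Y(N). Consequently, (1/q)·S_Y(N, c⃗) − (N/r)·H_Y(N) ≥ (1/(q+1) − 1/r)·N·H_Y(N) − ((2q+1)Δ/q)·H_Y(N). -/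
open scoped BigOperators

open Filter


open Finset in
/-- Greedy monomial bases. -/
lemma hw_exists_basis {V ι κ : Type*} [AddCommGroup V] [Module ℂ V] [DecidableEq ι]
    (M : Finset ι) (v : ι → V) (w : ι → ℕ) (N : ℕ)
    (K : Finset κ) (e : κ → V) (u : κ → ℕ) (huN : ∀ k ∈ K, u k ≤ N)
    (he : LinearIndepOn ℂ e (K : Set κ))
    (hs : ∀ k ∈ K, e k ∈ Submodule.span ℂ (v '' {i | i ∈ M ∧ u k ≤ w i})) :
    ∃ B : Finset ι, B ⊆ M ∧ LinearIndepOn ℂ v (B : Set ι) ∧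
      Submodule.span ℂ (v '' (B : Set ι)) = Submodule.span ℂ (v '' (M : Set ι)) ∧
      ∑ k ∈ K, u k ≤ ∑ i ∈ B, w i := by
  classical
  have key : ∀ n : ℕ, ∃ B : Set ι, B ⊆ (M : Set ι) ∧ LinearIndepOn ℂ v B ∧
      ∀ t : ℕ, N + 1 ≤ t + n → v '' {i | i ∈ M ∧ t ≤ w i} ⊆
        Submodule.span ℂ (v '' {i | i ∈ B ∧ t ≤ w i}) ∨ N + 1 ≤ t := by
    intro n
    induction n with
    | zero =>
      exact ⟨∅, by simp, by simp, fun t ht => Or.inr (by simpa using ht)⟩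
    | succ n ih =>
      obtain ⟨B, hBM, hBi, hB⟩ := ih
      have hBi' : LinearIndepOn ℂ v (B ∩ {i | N - n ≤ w i}) := hBi.mono Set.inter_subset_left
      obtain ⟨B', h1, h2, h3, h4⟩ := exists_linearIndepOn_extension hBi'
        (t := {i | i ∈ M ∧ N - n ≤ w i}) (fun i hi => ⟨hBM hi.1, hi.2⟩)
      refine ⟨B', fun i hi => (h1 hi).1, h4, fun t ht => ?_⟩
      by_cases htN : N + 1 ≤ t
      · exact Or.inr htN
      left
      by_cases ht' : N + 1 ≤ t + n
      · rcases hB t ht' with h | h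
        · refine h.trans (Submodule.span_mono (Set.image_mono ?_))
          intro i hi
          exact ⟨h2 ⟨hi.1, show N - n ≤ w i by have := hi.2; omega⟩, hi.2⟩
        · exact absurd h htN
      · have : t = N - n := by omega
        subst this
        refine h3.trans (Submodule.span_mono (Set.image_mono ?_))
        intro i hi
        exact ⟨hi, (h1 hi).2⟩
  obtain ⟨B0, hBM, hBi, hB⟩ := key (N + 1)
  have hfin : B0.Finite := M.finite_toSet.subset hBM
  obtain ⟨B, rfl⟩ : ∃ B : Finset ι, (B : Set ι) = B0 := ⟨hfin.toFinset, by simp⟩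
  have hB' : ∀ t ≤ N, v '' {i | i ∈ M ∧ t ≤ w i} ⊆
        Submodule.span ℂ (v '' {i | i ∈ B ∧ t ≤ w i}) := fun t ht => by
    rcases hB t (by omega) with h | h
    · exact h
    · omega
  refine ⟨B, by exact_mod_cast hBM, hBi, ?_, ?_⟩
  · apply le_antisymm (Submodule.span_mono (Set.image_mono hBM))
    rw [Submodule.span_le]
    simpa using hB' 0 (Nat.zero_le _)
  · have hcard : ∀ t ≤ N, (K.filter (fun k => t ≤ u k)).card ≤ (B.filter (fun i => t ≤ w i)).card := by
      intro t ht
      have hi1 : LinearIndepOn ℂ e ((K.filter (fun k => t ≤ u k) : Finset κ) : Set κ) :=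
        he.mono (by intro k; simp; tauto)
      let F := Submodule.span ℂ ((Finset.image v (B.filter (fun i => t ≤ w i)) : Finset V) : Set V)
      have hmem : ∀ k : (K.filter (fun k => t ≤ u k) : Finset κ), e k ∈ F := by
        rintro ⟨k, hk⟩
        rw [Finset.mem_filter] at hk
        have h1 := hs k hk.1
        have h2 : Submodule.span ℂ (v '' {i | i ∈ M ∧ u k ≤ w i}) ≤ F := by
          refine (Submodule.span_mono (Set.image_mono ?_)).trans (Submodule.span_le.2 ((hB' t ht).trans ?_))
          · exact fun i hi => ⟨hi.1, hk.2.trans hi.2⟩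
          · refine Submodule.span_mono ?_
            simp
        exact h2 h1
      have hli : LinearIndependent ℂ (fun k : (K.filter (fun k => t ≤ u k) : Finset κ) => (⟨e k, hmem k⟩ : F)) := by
        apply LinearIndependent.of_comp F.subtype
        exact hi1
      have : FiniteDimensional ℂ F := FiniteDimensional.span_finset ℂ _
      have h3 := hli.fintype_card_le_finrank
      rw [Fintype.card_coe] at h3
      exact h3.trans ((finrank_span_finset_le_card _).trans Finset.card_image_le)
    have hwsum : ∀ x : ℕ, ∑ t ∈ range N, (if t + 1 ≤ x then 1 else 0) = min x N := by
      intro x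
      rw [← Finset.sum_filter]
      have : (range N).filter (fun t => t + 1 ≤ x) = range (min x N) := by
        ext; simp; omega
      rw [this]; simp
    calc ∑ k ∈ K, u k = ∑ k ∈ K, ∑ t ∈ range N, (if t + 1 ≤ u k then 1 else 0) := by
          refine Finset.sum_congr rfl fun k hk => ?_
          rw [hwsum, min_eq_left (huN k hk)]
      _ = ∑ t ∈ range N, (K.filter (fun k => t + 1 ≤ u k)).card := by
          rw [Finset.sum_comm]
          simp only [Finset.card_filter]
      _ ≤ ∑ t ∈ range N, (B.filter (fun k => t + 1 ≤ w k)).card :=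
          Finset.sum_le_sum fun t ht => hcard _ (by simp at ht; omega)
      _ = ∑ k ∈ B, ∑ t ∈ range N, (if t + 1 ≤ w k then 1 else 0) := by
          rw [Finset.sum_comm]
          simp only [Finset.card_filter]
      _ ≤ ∑ i ∈ B, w i := Finset.sum_le_sum fun i _ => by rw [hwsum]; exact min_le_left _ _

/-- exponents of degree `M` -/
lemma hw_card {T : Type*} [Fintype T] [DecidableEq T] (q M : ℕ) (hT : Fintype.card T = q + 1) :
    ((Finset.univ : Finset T).finsuppAntidiag M).card = (M + q).choose q := by
  rw [Finset.card_finsuppAntidiag_nat_eq_choose]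
  rw [Finset.card_univ, hT, show q + 1 + M - 1 = M + q by omega, Nat.choose_symm_add]

lemma hw_sum {T : Type*} [Fintype T] [DecidableEq T] (q M : ℕ) (hT : Fintype.card T = q + 1) (t0 : T) :
    (q + 1) * ∑ m ∈ (Finset.univ : Finset T).finsuppAntidiag M, m t0 = M * (M + q).choose q := by
  have hsym : ∀ t : T, ∑ m ∈ (Finset.univ : Finset T).finsuppAntidiag M, m t
      = ∑ m ∈ (Finset.univ : Finset T).finsuppAntidiag M, m t0 := by
    intro t
    refine Finset.sum_nbij' (fun m => m.equivMapDomain (Equiv.swap t t0))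
      (fun m => m.equivMapDomain (Equiv.swap t t0)) ?_ ?_ ?_ ?_ ?_
    · intro m hm
      simp [Finset.mem_finsuppAntidiag] at hm ⊢
      rw [← hm]; exact Equiv.sum_comp (Equiv.swap t t0) m
    · intro m hm
      simp [Finset.mem_finsuppAntidiag] at hm ⊢
      rw [← hm]; exact Equiv.sum_comp (Equiv.swap t t0) m
    · intro m _; ext; simp
    · intro m _; ext; simp
    · intro m _; simp
  have h1 : ∑ t : T, ∑ m ∈ (Finset.univ : Finset T).finsuppAntidiag M, m t = M * (M + q).choose q := by
    rw [Finset.sum_comm, ← hw_card q M hT, mul_comm, ← smul_eq_mul, ← Finset.sum_const]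
    refine Finset.sum_congr rfl fun m hm => ?_
    simpa [Finset.mem_finsuppAntidiag] using hm
  rw [← h1, Finset.sum_congr rfl (fun t _ => hsym t)]
  simp [hT]

lemma hw_choose_ineq (q N d : ℕ) (hdN : d ≤ N) :
    ((N : ℝ) - 2 * d * q) * ((N + d + q).choose q : ℝ) ≤ N * ((N - d + q).choose q : ℝ) := by
  induction q with
  | zero => simp
  | succ q ih =>
    have hrec : ∀ M : ℕ, ((M + (q + 1)).choose (q + 1) : ℝ) * (q + 1) = (M + q).choose q * (M + q + 1) := by
      intro M
      have := Nat.add_one_mul_choose_eq (M + q) q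
      have h2 : (((M + q + 1) * (M + q).choose q : ℕ) : ℝ) = ((M + q + 1).choose (q + 1) * (q + 1) : ℕ) := by
        exact_mod_cast this
      push_cast at h2
      rw [← add_assoc]; linarith
    have h1 := hrec (N + d)
    have h2 := hrec (N - d)
    push_cast [Nat.cast_sub hdN] at h1 h2 ⊢
    have hq : (0 : ℝ) < q + 1 := by positivity
    rcases le_or_gt ((N : ℝ) - 2 * d * (q + 1)) 0 with h | h
    · exact (mul_nonpos_of_nonpos_of_nonneg h (by positivity)).trans (by positivity)
    · have hdN' : (d : ℝ) ≤ N := by exact_mod_cast hdN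
      refine le_of_mul_le_mul_right ?_ hq
      rw [mul_assoc (N : ℝ), h2, mul_assoc (_ - _), h1]
      set x : ℝ := (((N + d + q).choose q : ℕ) : ℝ)
      set y : ℝ := (((N - d + q).choose q : ℕ) : ℝ)
      have hx : 0 ≤ x := by positivity
      have h3 : ((N : ℝ) - 2 * d * (q+1)) * (N + d + q + 1) ≤ (N - 2 * d * q) * (N - d + q + 1) := by
        nlinarith [mul_nonneg (Nat.cast_nonneg d : (0:ℝ) ≤ d) (Nat.cast_nonneg q : (0:ℝ) ≤ q), mul_nonneg (mul_nonneg (Nat.cast_nonneg d : (0:ℝ) ≤ d) (Nat.cast_nonneg q : (0:ℝ) ≤ q)) (Nat.cast_nonneg d : (0:ℝ) ≤ d), (Nat.cast_nonneg d : (0:ℝ) ≤ d)]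
      calc _ = x * (((N : ℝ) - 2 * d * (q+1)) * (N + d + q + 1)) := by ring
        _ ≤ x * ((N - 2 * d * q) * (N - d + q + 1)) := by gcongr
        _ = ((N - 2 * d * q) * x) * (N - d + q + 1) := by ring
        _ ≤ (N * y) * (N - d + q + 1) := by
          apply mul_le_mul_of_nonneg_right ih
          have : (0:ℝ) ≤ q := by positivity
          linarith
        _ = _ := by ring

open Filter in
lemma hw_tendsto (q i : ℕ) :
    Tendsto (fun N : ℕ => (Nat.factorial q : ℝ) * ((N - i + q).choose q : ℝ) / (N : ℝ) ^ q) atTop (nhds 1) := by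
  induction q with
  | zero => simp
  | succ q ih =>
    have hrec : ∀ M : ℕ, ((M + (q + 1)).choose (q + 1) : ℝ) * (q + 1) = (M + q).choose q * (M + q + 1) := by
      intro M
      have := Nat.add_one_mul_choose_eq (M + q) q
      have h2 : (((M + q + 1) * (M + q).choose q : ℕ) : ℝ) = ((M + q + 1).choose (q + 1) * (q + 1) : ℕ) := by
        exact_mod_cast this
      push_cast at h2
      rw [← add_assoc]; linarith
    have h1 : Tendsto (fun N : ℕ => 1 + ((q : ℝ) + 1 - i) / (N : ℝ)) atTop (nhds (1 + 0)) :=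
      tendsto_const_nhds.add (tendsto_const_div_atTop_nhds_zero_nat _)
    have h2 := ih.mul h1
    simp only [add_zero, mul_one] at h2
    refine h2.congr' ?_
    filter_upwards [eventually_ge_atTop (i + 1)] with N hN
    have hN0 : (N : ℝ) ≠ 0 := by
      have : N ≠ 0 := by omega
      exact_mod_cast this
    have h3 := hrec (N - i)
    rw [Nat.cast_sub (by omega)] at h3
    rw [Nat.factorial_succ]
    push_cast
    have e : ((q : ℝ) + 1) * (q.factorial) * ((N - i + (q + 1)).choose (q + 1) : ℝ) = q.factorial * ((N - i + q).choose q * (N - i + q + 1)) := by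
      rw [← h3]; ring
    rw [e]
    field_simp
    ring

open Polynomial in
lemma hw_primitive (r : ℕ) {A S : Type*} [CommRing A] [IsDomain A] [IsIntegrallyClosed A]
    [CommRing S] [IsDomain S] [Algebra A S] [FaithfulSMul A S] [Module.Finite A S]
    [Algebra ℂ A] [Algebra ℂ S] [IsScalarTower ℂ A S]
    (y : Fin r → S) (hy : Algebra.adjoin A (Set.range y) = ⊤) :
    ∃ (c : Fin r → ℂ) (P : A[X]), P.Monic ∧ aeval (∑ i, c i • y i) P = 0 ∧
      (∀ p : A[X], p.degree < P.degree → aeval (∑ i, c i • y i) p = 0 → p = 0) ∧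
      aeval (∑ i, c i • y i) (derivative P) ≠ 0 ∧
      ∀ s : S, ∃ p : A[X], p.degree < P.degree ∧
        aeval (∑ i, c i • y i) (derivative P) * s = aeval (∑ i, c i • y i) p := by
  classical
  let K := FractionRing A
  let L := FractionRing S
  let _ : Algebra K L := FractionRing.liftAlgebra A L
  have : IsScalarTower A K L := inferInstance
  have hfd : FiniteDimensional K L := .of_isLocalization A S (nonZeroDivisors A)
  have : CharZero A := by
    exact (algebraMap ℂ A).charZero_iff (algebraMap ℂ A).injective |>.1 inferInstance
  have : CharZero K := by
    exact (algebraMap A K).charZero_iff (IsFractionRing.injective A K) |>.1 inferInstance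
  have : Algebra.IsSeparable K L := inferInstance
  have hAint : ∀ s : S, IsIntegral A s := fun s => Algebra.IsIntegral.isIntegral s
  have : Finite (IntermediateField K L) :=
    Field.finite_intermediateField_of_exists_primitive_element K L (Field.exists_primitive_element K L)
  -- the linear map ℂ^r → L
  let f : (Fin r → ℂ) →ₗ[ℂ] S := Fintype.linearCombination ℂ y
  have hf : ∀ c, f c = ∑ i, c i • y i := fun c => Fintype.linearCombination_apply ℂ y c
  -- preimages of intermediate fields
  have hsm : ∀ (E : IntermediateField K L) (c : ℂ) (s : S), algebraMap S L s ∈ E →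
      algebraMap S L (c • s) ∈ E := by
    intro E c s hs
    have h1 : c • s = algebraMap A S (algebraMap ℂ A c) * s := by
      rw [← IsScalarTower.algebraMap_apply, Algebra.smul_def]
    rw [h1, map_mul]
    refine E.mul_mem ?_ hs
    rw [← IsScalarTower.algebraMap_apply A S L, IsScalarTower.algebraMap_apply A K L]
    exact E.algebraMap_mem _
  let W : IntermediateField K L → Submodule ℂ (Fin r → ℂ) := fun E =>
    { carrier := {c | algebraMap S L (f c) ∈ E}
      add_mem' := by
        intro a b ha hb
        simp only [Set.mem_ofPred_eq, map_add] at *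
        exact E.add_mem ha hb
      zero_mem' := by simp
      smul_mem' := by
        intro a b hb
        simp only [Set.mem_ofPred_eq, map_smul] at *
        exact hsm E a _ hb }
  have hWtop : ∀ E, W E = ⊤ → E = ⊤ := by
    intro E hE
    have h1 : ∀ i, algebraMap S L (y i) ∈ E := by
      intro i
      have : (Pi.single i 1 : Fin r → ℂ) ∈ W E := by rw [hE]; trivial
      have h2 : algebraMap S L (f (Pi.single i 1)) ∈ E := this
      simpa [hf, Pi.single_apply] using h2
    have h2 : ∀ s : S, algebraMap S L s ∈ E := by
      intro s
      have hs : s ∈ Algebra.adjoin A (Set.range y) := by rw [hy]; trivial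
      induction hs using Algebra.adjoin_induction with
      | mem x hx => obtain ⟨i, rfl⟩ := hx; exact h1 i
      | algebraMap a =>
        rw [← IsScalarTower.algebraMap_apply A S L, IsScalarTower.algebraMap_apply A K L]
        exact E.algebraMap_mem _
      | add a b _ _ ha hb => rw [map_add]; exact E.add_mem ha hb
      | mul a b _ _ ha hb => rw [map_mul]; exact E.mul_mem ha hb
    rw [eq_top_iff]
    intro l _
    obtain ⟨a, b, hb, rfl⟩ := IsFractionRing.div_surjective (A := S) l
    exact E.div_mem (h2 a) (h2 b)
  obtain ⟨c, hc⟩ : ∃ c : Fin r → ℂ, IntermediateField.adjoin K {algebraMap S L (f c)} = ⊤ := by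
    by_contra hcon
    push Not at hcon
    obtain ⟨E, hE⟩ := Subspace.exists_eq_top_of_iUnion_eq_univ
      (p := fun E : {E : IntermediateField K L // E ≠ ⊤} => W E.1) (by
        rw [Set.eq_univ_iff_forall]
        intro c
        rw [Set.mem_iUnion]
        refine ⟨⟨_, hcon c⟩, ?_⟩
        exact IntermediateField.mem_adjoin_simple_self K _)
    exact E.2 (hWtop _ hE)
  set x := f c with hx
  refine ⟨c, minpoly A x, ?_⟩
  rw [← hf, ← hx]
  have hxK : Algebra.adjoin K {algebraMap S L x} = ⊤ := by
    rw [← IntermediateField.adjoin_simple_toSubalgebra_of_isAlgebraic (Algebra.IsAlgebraic.isAlgebraic _), hc]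
    rfl
  have hm := minpoly.isIntegrallyClosed_eq_field_fractions K L (hAint x)
  have hmon := minpoly.monic (hAint x)
  have hAx : IsIntegral A (algebraMap S L x) := (hAint x).map (IsScalarTower.toAlgHom A S L)
  have hne₁ : aeval (algebraMap S L x) (derivative (minpoly K (algebraMap S L x))) ≠ 0 :=
    (Algebra.IsSeparable.isSeparable _ _).aeval_derivative_ne_zero (minpoly.aeval _ _)
  have hd : aeval (algebraMap S L x) (derivative (minpoly K (algebraMap S L x))) =
      algebraMap S L (aeval x (derivative (minpoly A x))) := by
    rw [hm, derivative_map, aeval_map_algebraMap, aeval_algebraMap_apply]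
  refine ⟨hmon, minpoly.aeval _ _, ?_, ?_, ?_⟩
  · intro p hp hp0
    by_contra hne
    have := minpoly.IsIntegrallyClosed.degree_le_of_ne_zero hne hp0
    exact absurd hp (not_lt.2 this)
  · intro h
    rw [hd, h, map_zero] at hne₁
    exact hne₁ rfl
  · intro s
    have h1 : algebraMap S L s ∈ (Algebra.traceForm K L).dualSubmodule
        (Subalgebra.toSubmodule (Algebra.adjoin A {algebraMap S L x})) := by
      rw [LinearMap.BilinForm.mem_dualSubmodule]
      intro z hz
      have hzi : IsIntegral A z := by
        have : Algebra.adjoin A {algebraMap S L x} ≤ integralClosure A L :=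
          Algebra.adjoin_le (Set.singleton_subset_iff.2 hAx)
        exact this hz
      have hsi : IsIntegral A (algebraMap S L s) := (hAint s).map (IsScalarTower.toAlgHom A S L)
      rw [Algebra.traceForm_apply]
      have := Algebra.isIntegral_trace (L := K) (hsi.mul hzi)
      obtain ⟨a, ha⟩ := IsIntegrallyClosed.isIntegral_iff.1 this
      rw [Submodule.mem_one]
      exact ⟨a, ha⟩
    rw [traceForm_dualSubmodule_adjoin A K hxK hAx, Submodule.mem_smul_iff_inv_mul_mem (inv_ne_zero hne₁), inv_inv, hd, ← map_mul] at h1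
    have h2 : algebraMap S L (aeval x (derivative (minpoly A x)) * s) ∈
      Algebra.adjoin A {algebraMap S L x} := h1
    rw [Algebra.adjoin_singleton_eq_range_aeval] at h2
    obtain ⟨p, hp⟩ := h2
    refine ⟨p %ₘ minpoly A x, degree_modByMonic_lt _ hmon, ?_⟩
    rw [Polynomial.aeval_modByMonic_eq_self_of_root (minpoly.aeval _ _)]
    apply IsFractionRing.injective S L
    rw [← hp]
    exact aeval_algebraMap_apply L x p

open MvPolynomial in
lemma hw_hc_mul {σ : Type*} {m : ℕ} (n : ℕ) (p h : MvPolynomial σ ℂ) (hh : h.IsHomogeneous m) :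
    homogeneousComponent (n + m) (p * h) = homogeneousComponent n p * h := by
  conv_lhs => rw [← sum_homogeneousComponent p, Finset.sum_mul, map_sum]
  have h1 : ∀ j, homogeneousComponent (n + m) (homogeneousComponent j p * h) =
      if j = n then homogeneousComponent n p * h else 0 := by
    intro j
    rw [homogeneousComponent_of_mem (n := j + m) ((homogeneousComponent_isHomogeneous j p).mul hh)]
    by_cases hj : j = n
    · subst hj; simp
    · rw [if_neg hj, if_neg (by omega)]
  simp only [h1, Finset.sum_ite_eq', Finset.mem_range]
  split_ifs with h2
  · rfl
  · rw [homogeneousComponent_eq_zero _ _ (by omega), zero_mul]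

open MvPolynomial in
/-- Nullstellensatz. -/
lemma hw_nullst {r : ℕ} (I : Ideal (MvPolynomial (Fin r) ℂ)) (T : Finset (Fin r))
    (hgen : ∀ x : Fin r → ℂ, (∀ p ∈ I, eval x p = 0) → (∀ j ∈ T, x j = 0) → x = 0) :
    ∃ D : ℕ, 1 ≤ D ∧ ∀ n, D ≤ n → ∀ p : MvPolynomial (Fin r) ℂ, p.IsHomogeneous n →
      p ∈ I ⊔ Ideal.span ((fun t => X t) '' (T : Set (Fin r))) := by
  set J := I ⊔ Ideal.span ((fun t => (X t : MvPolynomial (Fin r) ℂ)) '' (T : Set (Fin r))) with hJ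
  let m : Ideal (MvPolynomial (Fin r) ℂ) := Ideal.span (Set.range X)
  have h1 : m ≤ J.radical := by
    rw [← vanishingIdeal_zeroLocus_eq_radical (K := ℂ), Ideal.span_le]
    rintro _ ⟨i, rfl⟩
    intro x hx
    have hx0 : x = 0 := by
      apply hgen x
      · intro p hp
        have := hx p (Ideal.mem_sup_left hp)
        simpa [aeval_eq_eval] using this
      · intro j hj
        have := hx (X j) (Ideal.mem_sup_right (Ideal.subset_span ⟨j, hj, rfl⟩))
        simpa using this
    simp [hx0]
  obtain ⟨D, hD⟩ := Ideal.exists_pow_le_of_le_radical_of_fg h1 (IsNoetherian.noetherian _)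
  refine ⟨D + 1, by omega, fun n hn p hp => hD (Ideal.pow_le_pow_right (show D ≤ n by omega) ?_)⟩
  have := (Ideal.mem_span_pow_iff_exists_isHomogeneous (n := n) (X : Fin r → MvPolynomial (Fin r) ℂ) p).2
    ⟨map C p, hp.map C, by
      rw [MvPolynomial.eval_map]; exact eval₂_eta p⟩
  exact this

open MvPolynomial in
lemma hw_gen {r : ℕ} {S : Type*} [CommRing S] [Algebra ℂ S]
    (π : MvPolynomial (Fin r) ℂ →ₐ[ℂ] S)
    (hπh : ∀ n p, π p = 0 → π (homogeneousComponent n p) = 0)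
    (T : Finset (Fin r)) (D : ℕ) (hD1 : 1 ≤ D)
    (hD : ∀ n, D ≤ n → ∀ p : MvPolynomial (Fin r) ℂ, p.IsHomogeneous n →
      p ∈ RingHom.ker π ⊔ Ideal.span ((fun t => X t) '' (T : Set (Fin r)))) (n : ℕ) :
    ∀ p : MvPolynomial (Fin r) ℂ, p.IsHomogeneous n → π p ∈ Submodule.span ℂ
      {s : S | ∃ (b : Fin r →₀ ℕ) (j : ℕ) (a : MvPolynomial T ℂ), b.degree < D ∧ j + b.degree = n ∧
        a.IsHomogeneous j ∧ s = π (rename Subtype.val a) * π (monomial b 1)} := by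
  induction n with
  | zero =>
    intro p hp
    rw [p.as_sum, map_sum]
    refine Submodule.sum_mem _ fun b hb => ?_
    have hbd : b.degree = 0 := (hp.degree_eq_sum_deg_support hb).symm
    rw [← mul_one (coeff b p), ← smul_eq_mul, ← smul_monomial, map_smul]
    refine Submodule.smul_mem _ _ (Submodule.subset_span ⟨b, 0, 1, by omega, by omega,
      isHomogeneous_one _ _, by simp⟩)
  | succ n ih =>
    intro p hp
    by_cases hn : D ≤ n + 1
    · obtain ⟨i, hi, g, hg, hig⟩ := Submodule.mem_sup.1 (hD _ hn p hp)
      have hpi : π p = π (homogeneousComponent (n + 1) g) := by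
        have := hπh (n + 1) i hi
        rw [← homogeneousComponent_eq_self hp, ← hig, map_add, map_add, this, zero_add]
      rw [hpi]
      suffices hQ : ∀ c : MvPolynomial (Fin r) ℂ, π (homogeneousComponent (n + 1) (c * g)) ∈
          Submodule.span ℂ {s : S | ∃ (b : Fin r →₀ ℕ) (j : ℕ) (a : MvPolynomial T ℂ),
            b.degree < D ∧ j + b.degree = n + 1 ∧ a.IsHomogeneous j ∧
            s = π (rename Subtype.val a) * π (monomial b 1)} by
        simpa using hQ 1
      clear hpi hig
      induction hg using Submodule.span_induction with
      | mem x hx =>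
        obtain ⟨t, ht, rfl⟩ := hx
        intro c
        simp only []
        rw [hw_hc_mul n c (X t) (isHomogeneous_X _ _), map_mul, mul_comm]
        have h1 := ih _ (homogeneousComponent_isHomogeneous n c)
        have h2 := Submodule.mem_map_of_mem (f := LinearMap.mulLeft ℂ (π (X t))) h1
        rw [Submodule.map_span] at h2
        refine Submodule.span_mono ?_ h2
        rintro _ ⟨_, ⟨b, j, a, hb, hj, ha, rfl⟩, rfl⟩
        refine ⟨b, 1 + j, X ⟨t, ht⟩ * a, hb, by omega, (isHomogeneous_X _ _).mul ha, ?_⟩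
        simp [mul_assoc]
      | zero => intro c; simp
      | add x y _ _ hx hy =>
        intro c
        rw [mul_add, map_add, map_add]
        exact Submodule.add_mem _ (hx c) (hy c)
      | smul a x _ hx =>
        intro c
        rw [smul_eq_mul, ← mul_assoc]
        exact hx _
    · rw [p.as_sum, map_sum]
      refine Submodule.sum_mem _ fun b hb => ?_
      have hbd : b.degree = n + 1 := (hp.degree_eq_sum_deg_support hb).symm
      rw [← mul_one (coeff b p), ← smul_eq_mul, ← smul_monomial, map_smul]
      refine Submodule.smul_mem _ _ (Submodule.subset_span ⟨b, 0, 1, by omega, by omega,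
        isHomogeneous_one _ _, by simp⟩)

open MvPolynomial in
lemma hw_finrank {T : Type*} [Fintype T] [DecidableEq T] (j : ℕ) :
    Module.finrank ℂ (homogeneousSubmodule T ℂ j) =
      ((Finset.univ : Finset T).finsuppAntidiag j).card ∧
    FiniteDimensional ℂ (homogeneousSubmodule T ℂ j) := by
  have hset : ∀ d : T →₀ ℕ, d ∈ (Finset.univ : Finset T).finsuppAntidiag j ↔ d.degree = j := by
    intro d
    simp [Finset.mem_finsuppAntidiag, Finsupp.degree_eq_sum]
  have hli : LinearIndependent ℂ (fun d : (Finset.univ : Finset T).finsuppAntidiag j =>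
      (monomial d.1 1 : MvPolynomial T ℂ)) := by
    have := (basisMonomials T ℂ).linearIndependent.comp
      (fun d : (Finset.univ : Finset T).finsuppAntidiag j => d.1) Subtype.val_injective
    simpa [Function.comp_def] using this
  have heq : homogeneousSubmodule T ℂ j = Submodule.span ℂ (Set.range
      (fun d : (Finset.univ : Finset T).finsuppAntidiag j =>
      (monomial d.1 1 : MvPolynomial T ℂ))) := by
    apply le_antisymm
    · intro p hp
      rw [p.as_sum]
      refine Submodule.sum_mem _ fun b hb => ?_
      have hbd : b.degree = j := (IsHomogeneous.degree_eq_sum_deg_support hp hb).symm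
      rw [← mul_one (coeff b p), ← smul_eq_mul, ← smul_monomial]
      exact Submodule.smul_mem _ _ (Submodule.subset_span ⟨⟨b, (hset b).2 hbd⟩, rfl⟩)
    · rw [Submodule.span_le]
      rintro _ ⟨d, rfl⟩
      exact isHomogeneous_monomial _ ((hset d.1).1 d.2)
  rw [heq]
  refine ⟨?_, ?_⟩
  · rw [finrank_span_eq_card hli]; simp
  · exact FiniteDimensional.span_of_finite ℂ (Set.finite_range _)

lemma hw_finrank_sup {V ι : Type*} [AddCommGroup V] [Module ℂ V] (s : Finset ι)
    (F : ι → Submodule ℂ V) (hF : ∀ i, FiniteDimensional ℂ (F i)) :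
    Module.finrank ℂ (s.sup F : Submodule ℂ V) ≤ ∑ i ∈ s, Module.finrank ℂ (F i) := by
  classical
  induction s using Finset.induction_on with
  | empty => simp
  | insert a s ha ih =>
    rw [Finset.sup_insert, Finset.sum_insert ha]
    have : FiniteDimensional ℂ (s.sup F : Submodule ℂ V) := Submodule.finiteDimensional_finset_sup s F
    exact (Submodule.finrank_add_le_finrank_add_finrank _ _).trans (by omega)

open MvPolynomial Filter in
lemma hw_inj {r : ℕ} {S : Type*} [CommRing S] [Algebra ℂ S]
    (π : MvPolynomial (Fin r) ℂ →ₐ[ℂ] S)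
    (hπh : ∀ n p, π p = 0 → π (homogeneousComponent n p) = 0)
    (T : Finset (Fin r)) (q : ℕ) (hT : T.card = q + 1) (D : ℕ) (hD1 : 1 ≤ D)
    (hD : ∀ n, D ≤ n → ∀ p : MvPolynomial (Fin r) ℂ, p.IsHomogeneous n →
      p ∈ RingHom.ker π ⊔ Ideal.span ((fun t => X t) '' (T : Set (Fin r))))
    (Δ : ℕ) (hΔ : 0 < Δ)
    (hH : Tendsto (fun n : ℕ => (Nat.factorial q : ℝ) * (Module.finrank ℂ
      ((homogeneousSubmodule (Fin r) ℂ n).map π.toLinearMap) : ℝ) / (n : ℝ) ^ q) atTop (nhds (Δ : ℝ))) :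
    Function.Injective (π.comp (rename (Subtype.val : T → Fin r))) := by
  classical
  set φ := π.comp (rename (Subtype.val : T → Fin r)) with hφ
  have hTc : Fintype.card T = q + 1 := by simpa using hT
  rw [injective_iff_map_eq_zero]
  intro f0 hf0
  by_contra hne
  obtain ⟨e, he⟩ : ∃ e, homogeneousComponent e f0 ≠ 0 := by
    by_contra hcon
    push Not at hcon
    apply hne
    rw [← sum_homogeneousComponent f0]
    exact Finset.sum_eq_zero fun i _ => hcon i
  set f := homogeneousComponent e f0 with hf
  have hfe : f.IsHomogeneous e := homogeneousComponent_isHomogeneous e f0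
  have hφf : φ f = 0 := by
    have := hπh e _ hf0
    rw [hφ, AlgHom.comp_apply, hf, rename_homogeneousComponent]
    exact this
  have hAfd : ∀ j, FiniteDimensional ℂ (homogeneousSubmodule T ℂ j) := fun j => (hw_finrank j).2
  have hAfr : ∀ j, Module.finrank ℂ (homogeneousSubmodule T ℂ j) = (j + q).choose q := fun j => by
    rw [(hw_finrank j).1, hw_card q j hTc]
  have hbound : ∀ j, e ≤ j → Module.finrank ℂ ((homogeneousSubmodule T ℂ j).map φ.toLinearMap)
      + (j - e + q).choose q ≤ (j + q).choose q := by
    intro j hj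
    let φj := φ.toLinearMap.domRestrict (homogeneousSubmodule T ℂ j)
    have h1 := φj.finrank_range_add_finrank_ker
    rw [hAfr, LinearMap.range_domRestrict] at h1
    let g : homogeneousSubmodule T ℂ (j - e) →ₗ[ℂ] LinearMap.ker φj :=
      LinearMap.codRestrict _ (LinearMap.codRestrict (homogeneousSubmodule T ℂ j)
        ((LinearMap.mulLeft ℂ f).comp (Submodule.subtype _)) (by
          rintro ⟨a, ha⟩
          have := hfe.mul ha
          rw [Nat.add_sub_cancel' hj] at this
          exact this)) (by
          rintro ⟨a, ha⟩
          rw [LinearMap.mem_ker]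
          change φ (f * a) = 0
          rw [map_mul, hφf, zero_mul])
    have hg : Function.Injective g := by
      rintro ⟨a, ha⟩ ⟨b, hb⟩ hab
      have h2 : f * a = f * b := congrArg (fun z => z.1.1) hab
      exact Subtype.ext (mul_left_cancel₀ he h2)
    have h2 := LinearMap.finrank_le_finrank_of_injective hg
    rw [hAfr] at h2
    omega
  let Bs : Finset (Fin r →₀ ℕ) := (Finset.range D).biUnion (Finset.univ.finsuppAntidiag)
  have hBs : ∀ b, b ∈ Bs ↔ b.degree < D := by
    intro b
    simp [Bs, Finset.mem_finsuppAntidiag, Finsupp.degree_eq_sum]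
  have hG : ∀ n, D + e ≤ n → Module.finrank ℂ ((homogeneousSubmodule (Fin r) ℂ n).map π.toLinearMap)
      ≤ ∑ b ∈ Bs, Module.finrank ℂ ((homogeneousSubmodule T ℂ (n - b.degree)).map φ.toLinearMap) := by
    intro n hn
    let F : (Fin r →₀ ℕ) → Submodule ℂ S := fun b =>
      ((homogeneousSubmodule T ℂ (n - b.degree)).map φ.toLinearMap).map
        (LinearMap.mulRight ℂ (π (monomial b 1)))
    have hle : (homogeneousSubmodule (Fin r) ℂ n).map π.toLinearMap ≤ Bs.sup F := by
      rintro _ ⟨p, hp, rfl⟩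
      have h1 := hw_gen π hπh T D hD1 hD n p hp
      refine (Submodule.span_le.2 ?_) h1
      rintro _ ⟨b, j, a, hb, hj, ha, rfl⟩
      refine (Finset.le_sup (f := F) ((hBs b).2 hb)) ?_
      refine ⟨φ a, ⟨a, ?_, rfl⟩, rfl⟩
      rw [← hj, Nat.add_sub_cancel]
      exact ha
    have : FiniteDimensional ℂ (Bs.sup F : Submodule ℂ S) := Submodule.finiteDimensional_finset_sup Bs F
    refine (Submodule.finrank_mono hle).trans ((hw_finrank_sup Bs F (fun b => inferInstance)).trans ?_)
    exact Finset.sum_le_sum fun b _ => Submodule.finrank_map_le _ _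
  have hlim : Tendsto (fun n : ℕ => ∑ b ∈ Bs,
      ((Nat.factorial q : ℝ) * ((n - b.degree + q).choose q : ℝ) / (n : ℝ) ^ q -
       (Nat.factorial q : ℝ) * ((n - (b.degree + e) + q).choose q : ℝ) / (n : ℝ) ^ q)) atTop
       (nhds (∑ b ∈ Bs, ((1 : ℝ) - 1))) :=
    tendsto_finsetSum _ fun b _ => (hw_tendsto q _).sub (hw_tendsto q _)
  have hcon := le_of_tendsto_of_tendsto hH hlim (by
    filter_upwards [eventually_ge_atTop (D + e)] with n hn
    have h1 : (Module.finrank ℂ ((homogeneousSubmodule (Fin r) ℂ n).map π.toLinearMap) : ℝ) ≤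
        ∑ b ∈ Bs, (((n - b.degree + q).choose q : ℝ) - ((n - (b.degree + e) + q).choose q : ℝ)) := by
      refine le_trans (b := ((∑ b ∈ Bs, Module.finrank ℂ ((homogeneousSubmodule T ℂ (n - b.degree)).map φ.toLinearMap) : ℕ) : ℝ)) (by exact_mod_cast hG n hn) ?_
      push_cast
      refine Finset.sum_le_sum fun b hb => ?_
      have hb' := (hBs b).1 hb
      have h2 := hbound (n - b.degree) (by omega)
      rw [Nat.sub_sub] at h2
      rw [le_sub_iff_add_le]
      exact_mod_cast h2
    have h2 : ∑ b ∈ Bs,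
      ((Nat.factorial q : ℝ) * ((n - b.degree + q).choose q : ℝ) / (n : ℝ) ^ q -
       (Nat.factorial q : ℝ) * ((n - (b.degree + e) + q).choose q : ℝ) / (n : ℝ) ^ q) =
       (Nat.factorial q : ℝ) * (∑ b ∈ Bs, (((n - b.degree + q).choose q : ℝ) - ((n - (b.degree + e) + q).choose q : ℝ))) / (n : ℝ) ^ q := by
      rw [Finset.mul_sum, Finset.sum_div]
      refine Finset.sum_congr rfl fun b _ => by ring
    rw [h2]
    gcongr)
  simp at hcon
  omega

open MvPolynomial in
lemma hw_finite {r : ℕ} {S : Type*} [CommRing S] [Algebra ℂ S]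
    (π : MvPolynomial (Fin r) ℂ →ₐ[ℂ] S) (hπ : Function.Surjective π)
    (hπh : ∀ n p, π p = 0 → π (homogeneousComponent n p) = 0)
    (T : Finset (Fin r)) (D : ℕ) (hD1 : 1 ≤ D)
    (hD : ∀ n, D ≤ n → ∀ p : MvPolynomial (Fin r) ℂ, p.IsHomogeneous n →
      p ∈ RingHom.ker π ⊔ Ideal.span ((fun t => X t) '' (T : Set (Fin r))))
    [Algebra (MvPolynomial T ℂ) S] [IsScalarTower ℂ (MvPolynomial T ℂ) S]
    (hφ : ∀ a : MvPolynomial T ℂ, algebraMap (MvPolynomial T ℂ) S a = π (rename Subtype.val a)) :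
    Module.Finite (MvPolynomial T ℂ) S := by
  classical
  let Bs : Finset (Fin r →₀ ℕ) := (Finset.range D).biUnion (Finset.univ.finsuppAntidiag)
  have hBs : ∀ b, b ∈ Bs ↔ b.degree < D := by
    intro b
    simp [Bs, Finset.mem_finsuppAntidiag, Finsupp.degree_eq_sum]
  refine ⟨⟨Bs.image (fun b => π (monomial b 1)), ?_⟩⟩
  rw [eq_top_iff]
  intro s _
  obtain ⟨p, rfl⟩ := hπ s
  rw [← sum_homogeneousComponent p, map_sum]
  refine Submodule.sum_mem _ fun n _ => ?_
  have h1 := hw_gen π hπh T D hD1 hD n _ (homogeneousComponent_isHomogeneous n p)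
  rw [← Submodule.restrictScalars_mem ℂ]
  refine (Submodule.span_le.2 ?_) h1
  rintro _ ⟨b, j, a, hb, hj, ha, rfl⟩
  rw [← hφ, ← Algebra.smul_def]
  refine Submodule.smul_mem _ a (Submodule.subset_span ?_)
  simp only [Finset.coe_image]
  exact ⟨b, (hBs b).2 hb, rfl⟩

open MvPolynomial in
lemma hw_hom_part {r : ℕ} {T : Finset (Fin r)} (ℓ : MvPolynomial (Fin r) ℂ) (hℓ : ℓ.IsHomogeneous 1)
    (n : ℕ) (p : Polynomial (MvPolynomial T ℂ)) (hp : p.natDegree ≤ n) :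
    homogeneousComponent n (p.eval₂ (rename (Subtype.val : T → Fin r)).toRingHom ℓ) =
      ∑ i ∈ Finset.range (n + 1), rename Subtype.val (homogeneousComponent (n - i) (p.coeff i)) * ℓ ^ i := by
  rw [Polynomial.eval₂_eq_sum_range' _ (Nat.lt_succ_of_le hp), map_sum]
  refine Finset.sum_congr rfl fun i hi => ?_
  have hi' : i ≤ n := by simpa [Nat.lt_succ_iff] using hi
  have h1 : (ℓ ^ i).IsHomogeneous i := by simpa using hℓ.pow i
  have h2 := hw_hc_mul (n - i) (rename Subtype.val (p.coeff i)) (ℓ ^ i) h1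
  rw [Nat.sub_add_cancel hi'] at h2
  rw [rename_homogeneousComponent]
  exact h2

open MvPolynomial in
lemma hw_struct {r : ℕ} {S : Type*} [CommRing S] [IsDomain S] [Algebra ℂ S]
    (π : MvPolynomial (Fin r) ℂ →ₐ[ℂ] S) (hπ : Function.Surjective π)
    (hπh : ∀ n p, π p = 0 → π (homogeneousComponent n p) = 0)
    (T : Finset (Fin r)) (q : ℕ) (hT : T.card = q + 1)
    [Algebra (MvPolynomial T ℂ) S] [IsScalarTower ℂ (MvPolynomial T ℂ) S]
    (hφ : ∀ a : MvPolynomial T ℂ, algebraMap (MvPolynomial T ℂ) S a = π (rename Subtype.val a))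
    [Module.Finite (MvPolynomial T ℂ) S] [FaithfulSMul (MvPolynomial T ℂ) S] :
    ∃ (ℓ : MvPolynomial (Fin r) ℂ) (d : ℕ), ℓ.IsHomogeneous 1 ∧
      LinearIndependent ℂ (fun k : (Σ _ : Fin d, (T →₀ ℕ)) =>
        π (rename Subtype.val (monomial k.2 (1 : ℂ))) * (π ℓ) ^ (k.1 : ℕ)) ∧
      ∀ N, Module.finrank ℂ ((homogeneousSubmodule (Fin r) ℂ N).map π.toLinearMap) ≤
        d * (N + d + q).choose q := by
  classical
  have hTc : Fintype.card T = q + 1 := by simpa using hT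
  have hadj : Algebra.adjoin (MvPolynomial T ℂ) (Set.range (fun i => π (X i))) = ⊤ := by
    rw [eq_top_iff]
    intro s _
    obtain ⟨p, rfl⟩ := hπ s
    induction p using MvPolynomial.induction_on with
    | C a =>
      have : π (C a) = algebraMap (MvPolynomial T ℂ) S (C a) := by rw [hφ]; simp
      rw [this]; exact Subalgebra.algebraMap_mem _ _
    | add p q hp hq => rw [map_add]; exact Subalgebra.add_mem _ (hp trivial) (hq trivial)
    | mul_X p i hp =>
      rw [map_mul]; exact Subalgebra.mul_mem _ (hp trivial) (Algebra.subset_adjoin ⟨i, rfl⟩)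
  obtain ⟨c, P, hmon, hP0, hPmin, hPd, hPs⟩ := hw_primitive r (fun i => π (X i)) hadj
  set ℓ : MvPolynomial (Fin r) ℂ := ∑ i, c i • X i with hℓdef
  have hℓx : ∑ i, c i • π (X i) = π ℓ := by simp [hℓdef]
  simp only [hℓx] at hP0 hPmin hPd hPs
  have hℓ : ℓ.IsHomogeneous 1 := by
    refine IsHomogeneous.sum _ _ _ fun i _ => ?_
    rw [smul_eq_C_mul]
    exact isHomogeneous_C_mul_X _ _
  set d := P.natDegree with hd
  have hPdeg : P.degree = d := Polynomial.degree_eq_natDegree hmon.ne_zero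
  have hlift : ∀ p : Polynomial (MvPolynomial T ℂ), Polynomial.aeval (π ℓ) p =
      π (p.eval₂ (rename (Subtype.val : T → Fin r)).toRingHom ℓ) := by
    intro p
    have h1 := Polynomial.hom_eval₂ p (rename (R := ℂ) (Subtype.val : T → Fin r)).toRingHom π.toRingHom ℓ
    have h2 : algebraMap (MvPolynomial T ℂ) S =
        π.toRingHom.comp (rename (R := ℂ) (Subtype.val : T → Fin r)).toRingHom := RingHom.ext hφ
    rw [Polynomial.aeval_def, h2]
    exact h1.symm
  -- homogeneity of P
  have hPhom : ∀ i ≤ d, (P.coeff i).IsHomogeneous (d - i) := by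
    let R : Polynomial (MvPolynomial T ℂ) := ∑ i ∈ Finset.range (d + 1),
      Polynomial.monomial i (homogeneousComponent (d - i) (P.coeff i))
    have hRc : ∀ i, R.coeff i = if i ≤ d then homogeneousComponent (d - i) (P.coeff i) else 0 := by
      intro i
      simp [R, Polynomial.finsetSum_coeff, Polynomial.coeff_monomial]
    have hR0 : Polynomial.aeval (π ℓ) R = 0 := by
      have h1 := hP0
      rw [hlift] at h1
      have h2 := hπh d _ h1
      rw [hw_hom_part ℓ hℓ d P le_rfl, map_sum] at h2
      rw [← h2, map_sum]
      refine Finset.sum_congr rfl fun i _ => ?_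
      rw [Polynomial.aeval_monomial, map_mul, map_pow, hφ]
    have hPR : P - R = 0 := by
      apply hPmin
      · rw [hPdeg, Polynomial.degree_lt_iff_coeff_zero]
        intro m hm
        rw [Polynomial.coeff_sub, hRc]
        rcases hm.lt_or_eq with h | h
        · rw [if_neg (by omega), Polynomial.coeff_eq_zero_of_natDegree_lt (by omega), sub_zero]
        · subst h
          have : P.coeff d = 1 := hmon
          rw [if_pos le_rfl, this, Nat.sub_self,
            homogeneousComponent_eq_self (isHomogeneous_one _ _), sub_self]
      · rw [map_sub, hP0, hR0, sub_zero]
    intro i hi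
    have h3 : P.coeff i = R.coeff i := by rw [sub_eq_zero.1 hPR]
    rw [h3, hRc, if_pos hi]
    exact homogeneousComponent_isHomogeneous _ _
  have hd1 : 1 ≤ d := by
    by_contra hcon
    have h0 : P = 1 := hmon.natDegree_eq_zero.1 (by omega)
    rw [h0] at hP0
    simp at hP0
  set Q := (Polynomial.derivative P).eval₂ (rename (Subtype.val : T → Fin r)).toRingHom ℓ with hQ
  have hQhom : Q.IsHomogeneous (d - 1) := by
    rw [hQ, Polynomial.eval₂_eq_sum_range' _ (show (Polynomial.derivative P).natDegree < d from
      Polynomial.natDegree_derivative_lt (by omega))]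
    refine IsHomogeneous.sum _ _ _ fun i hi => ?_
    have hi' : i < d := by simpa using hi
    have h1 : ((Polynomial.derivative P).coeff i).IsHomogeneous (d - 1 - i) := by
      rw [Polynomial.coeff_derivative]
      have h2 := (hPhom (i + 1) (by omega)).mul (isHomogeneous_C T ((i : ℂ) + 1))
      rw [show d - (i + 1) + 0 = d - 1 - i by omega] at h2
      simpa using h2
    have h3 := (h1.rename_isHomogeneous (f := (Subtype.val : T → Fin r))).mul (hℓ.pow i)
    rw [show d - 1 - i + 1 * i = d - 1 by omega] at h3
    exact h3
  refine ⟨ℓ, d, hℓ, ?_, ?_⟩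
  · have hA : LinearIndependent (MvPolynomial T ℂ) (fun i : Fin d => (π ℓ) ^ (i : ℕ)) := by
      rw [Fintype.linearIndependent_iff]
      intro g hg
      have h1 := hPmin (∑ i : Fin d, Polynomial.C (g i) * Polynomial.X ^ (i : ℕ))
        (by rw [hPdeg]; exact Polynomial.degree_sum_fin_lt g) (by
          rw [map_sum, ← hg]
          refine Finset.sum_congr rfl fun i _ => ?_
          simp [Algebra.smul_def])
      intro i
      have h2 := congrArg (fun p => p.coeff (i : ℕ)) h1
      simpa [Polynomial.finsetSum_coeff, Polynomial.coeff_X_pow, Fin.val_inj] using h2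
    have h2 := linearIndependent_smul (basisMonomials T ℂ).linearIndependent hA
    have h3 := h2.comp (fun k : (Σ _ : Fin d, (T →₀ ℕ)) => (k.2, k.1)) (by
      rintro ⟨a, b⟩ ⟨a', b'⟩ h
      simp only [Prod.mk.injEq] at h
      rw [h.1, h.2])
    have h4 : ((fun p : (T →₀ ℕ) × Fin d => (basisMonomials T ℂ) p.1 • π ℓ ^ (p.2 : ℕ)) ∘
        fun k : (Σ _ : Fin d, (T →₀ ℕ)) => (k.2, k.1)) = (fun k : (Σ _ : Fin d, (T →₀ ℕ)) =>
        π (rename Subtype.val (monomial k.2 (1 : ℂ))) * (π ℓ) ^ (k.1 : ℕ)) := by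
      funext k
      simp only [Function.comp_apply, coe_basisMonomials, Algebra.smul_def]
      rw [hφ]
    rw [← h4]
    exact h3
  · intro N
    let n := N + d - 1
    let F : ℕ → Submodule ℂ S := fun i =>
      ((homogeneousSubmodule T ℂ (n - i)).map (π.comp (rename (Subtype.val : T → Fin r))).toLinearMap).map
        (LinearMap.mulRight ℂ ((π ℓ) ^ i))
    have hAfd : ∀ j, FiniteDimensional ℂ (homogeneousSubmodule T ℂ j) := fun j => (hw_finrank j).2
    have hAfr : ∀ j, Module.finrank ℂ (homogeneousSubmodule T ℂ j) = (j + q).choose q := fun j => by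
      rw [(hw_finrank j).1, hw_card q j hTc]
    have hle : ((homogeneousSubmodule (Fin r) ℂ N).map π.toLinearMap).map (LinearMap.mulLeft ℂ (π Q)) ≤
        (Finset.range d).sup F := by
      rintro _ ⟨_, ⟨g, hg, rfl⟩, rfl⟩
      obtain ⟨p, hpd, hp⟩ := hPs (π g)
      rw [hlift, hlift, ← hQ, ← map_mul] at hp
      have hQg : (Q * g).IsHomogeneous n := by
        have := hQhom.mul hg
        rwa [show d - 1 + N = n by omega] at this
      have h0 := hπh n (Q * g - p.eval₂ (rename (Subtype.val : T → Fin r)).toRingHom ℓ) (by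
        rw [map_sub, hp, sub_self])
      have hpn : p.natDegree ≤ n := by
        have := Polynomial.natDegree_le_natDegree hpd.le
        have : p.natDegree < d := by
          by_cases hp0 : p = 0
          · rw [hp0, Polynomial.natDegree_zero]; omega
          · exact Polynomial.natDegree_lt_natDegree hp0 hpd
        omega
      have hpc : ∀ i, d ≤ i → p.coeff i = 0 := by
        rw [hPdeg, Polynomial.degree_lt_iff_coeff_zero] at hpd
        exact hpd
      rw [map_sub, map_sub, homogeneousComponent_eq_self hQg, hw_hom_part ℓ hℓ n p hpn, sub_eq_zero,
        map_sum] at h0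
      change π Q * π g ∈ _
      rw [← map_mul, h0]
      refine Submodule.sum_mem _ fun i hi => ?_
      by_cases hid : i < d
      · refine (Finset.le_sup (f := F) (Finset.mem_range.2 hid)) ?_
        refine ⟨_, ⟨homogeneousComponent (n - i) (p.coeff i), homogeneousComponent_isHomogeneous _ _, rfl⟩, ?_⟩
        simp
      · rw [hpc i (by omega)]
        simp
    have hinj : Function.Injective (LinearMap.mulLeft ℂ (π Q)) := by
      intro a b hab
      have hne : π Q ≠ 0 := by rw [hQ, ← hlift]; exact hPd
      exact mul_left_cancel₀ hne hab
    have hfd : FiniteDimensional ℂ ((Finset.range d).sup F : Submodule ℂ S) :=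
      Submodule.finiteDimensional_finset_sup _ F
    have h1 := Submodule.finrank_mono hle
    rw [← (Submodule.equivMapOfInjective _ hinj _).finrank_eq] at h1
    refine h1.trans ((hw_finrank_sup (Finset.range d) F (fun b => inferInstance)).trans ?_)
    rw [← smul_eq_mul]
    refine (Finset.sum_le_card_nsmul _ _ ((N + d + q).choose q) fun i _ => ?_).trans (by simp)
    refine (Submodule.finrank_map_le _ _).trans ((Submodule.finrank_map_le _ _).trans ?_)
    rw [hAfr]
    exact Nat.choose_le_choose _ (by omega)

open MvPolynomial in
lemma hw_span_hom {r : ℕ} {S : Type*} [CommRing S] [Algebra ℂ S]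
    (π : MvPolynomial (Fin r) ℂ →ₐ[ℂ] S) (N : ℕ) :
    Submodule.span ℂ ((fun a : Fin r →₀ ℕ => π (monomial a (1 : ℂ))) ''
      ((Finset.univ.finsuppAntidiag N : Finset (Fin r →₀ ℕ)) : Set (Fin r →₀ ℕ))) =
    (homogeneousSubmodule (Fin r) ℂ N).map π.toLinearMap := by
  apply le_antisymm
  · rw [Submodule.span_le]
    rintro _ ⟨a, ha, rfl⟩
    refine ⟨monomial a 1, ?_, rfl⟩
    rw [SetLike.mem_coe, mem_homogeneousSubmodule]
    apply isHomogeneous_monomial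
    simpa [Finset.mem_finsuppAntidiag, Finsupp.degree_eq_sum] using ha
  · rintro _ ⟨p, hp, rfl⟩
    rw [SetLike.mem_coe, mem_homogeneousSubmodule] at hp
    change π p ∈ _
    rw [p.as_sum, map_sum]
    refine Submodule.sum_mem _ fun a ha => ?_
    rw [← mul_one (coeff a p), ← smul_eq_mul, ← smul_monomial, map_smul]
    refine Submodule.smul_mem _ _ (Submodule.subset_span ⟨a, ?_, rfl⟩)
    have : a.degree = N := by
      rw [Finsupp.degree_eq_weight_one]; exact hp (mem_support_iff.1 ha)
    simpa [Finset.mem_finsuppAntidiag, Finsupp.degree_eq_sum] using this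

open MvPolynomial in
lemma hw_mem_span {r : ℕ} {S : Type*} [CommRing S] [Algebra ℂ S]
    (π : MvPolynomial (Fin r) ℂ →ₐ[ℂ] S) (T : Finset (Fin r)) (t0 : T)
    (h : MvPolynomial (Fin r) ℂ) (i N : ℕ) (hi : i ≤ N) (hh : h.IsHomogeneous i)
    (m : T →₀ ℕ) (hm : m ∈ (Finset.univ : Finset T).finsuppAntidiag (N - i)) :
    π (rename Subtype.val (monomial m (1 : ℂ))) * π h ∈
      Submodule.span ℂ ((fun a : Fin r →₀ ℕ => π (monomial a (1 : ℂ))) ''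
        {a | a ∈ (Finset.univ.finsuppAntidiag N : Finset (Fin r →₀ ℕ)) ∧
          (N - i) - m t0 ≤ ∑ j ∈ T.erase t0, a j}) := by
  classical
  have hm' : ∑ t, m t = N - i := (Finset.mem_finsuppAntidiag.1 hm).1
  have hval : ∀ t : T, m.mapDomain Subtype.val (t : Fin r) = m t := fun t =>
    Finsupp.mapDomain_apply Subtype.val_injective _ _
  have hsT : ∑ j ∈ T, m.mapDomain Subtype.val j = N - i := by
    rw [← hm', ← Finset.sum_coe_sort]
    exact Finset.sum_congr rfl fun t _ => hval t
  have hsU : ∑ j, m.mapDomain Subtype.val j = N - i := by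
    rw [← hsT]
    symm
    refine Finset.sum_subset (Finset.subset_univ _) fun j _ hj => ?_
    refine Finsupp.mapDomain_of_notMem_range _ _ ?_
    rintro ⟨t, rfl⟩
    exact hj t.2
  have hsE : ∑ j ∈ T.erase t0, m.mapDomain Subtype.val j = (N - i) - m t0 := by
    have := Finset.sum_erase_add T (fun j => m.mapDomain Subtype.val j) t0.2
    rw [hsT] at this
    simp only [hval] at this
    omega
  rw [rename_monomial, ← map_mul, h.as_sum, Finset.mul_sum, map_sum]
  refine Submodule.sum_mem _ fun a ha => ?_
  rw [monomial_mul, one_mul, ← mul_one (coeff a h), ← smul_eq_mul, ← smul_monomial, map_smul]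
  refine Submodule.smul_mem _ _ (Submodule.subset_span ⟨_, ⟨?_, ?_⟩, rfl⟩)
  · have : a.degree = i := by
      rw [Finsupp.degree_eq_weight_one]; exact hh (mem_support_iff.1 ha)
    rw [Finsupp.degree_eq_sum] at this
    rw [Finset.mem_finsuppAntidiag]
    refine ⟨?_, Finset.subset_univ _⟩
    change ∑ j, (m.mapDomain Subtype.val + a) j = N
    simp only [Finsupp.add_apply, Finset.sum_add_distrib]
    rw [hsU, this]; omega
  · simp only [Finsupp.add_apply, Finset.sum_add_distrib]
    rw [hsE]; omega

lemma hw_numeric (q N d Δ H W : ℕ) (hdΔ : d ≤ Δ) (hN : Δ < N)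
    (hH : H ≤ d * (N + d + q).choose q)
    (hW : q * ∑ i ∈ Finset.range d, (N - i) * (N - i + q).choose q ≤ (q + 1) * W) :
    ((q : ℝ) / ((q : ℝ) + 1)) * (N : ℝ) * (H : ℝ) - (2 * (q : ℝ) + 1) * (Δ : ℝ) * (H : ℝ) ≤ (W : ℝ) := by
  set κ : ℝ := (q : ℝ) / ((q : ℝ) + 1) * N - (2 * q + 1) * Δ with hκ
  have e1 : ((q : ℝ) / ((q : ℝ) + 1)) * (N : ℝ) * (H : ℝ) - (2 * (q : ℝ) + 1) * (Δ : ℝ) * (H : ℝ) = κ * H := by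
    rw [hκ]; ring
  rw [e1]
  rcases le_or_gt κ 0 with h | h
  · exact (mul_nonpos_of_nonpos_of_nonneg h (Nat.cast_nonneg _)).trans (Nat.cast_nonneg _)
  set C : ℝ := ((N + d + q).choose q : ℝ) with hC
  set C' : ℝ := ((N - d + q).choose q : ℝ) with hC'
  have hC0 : 0 ≤ C := Nat.cast_nonneg _
  have hN0 : (0 : ℝ) < N := by exact_mod_cast (by omega : 0 < N)
  have hdN : (d : ℝ) ≤ N := by exact_mod_cast (by omega : d ≤ N)
  have hdΔ' : (d : ℝ) ≤ Δ := by exact_mod_cast hdΔ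
  have hq0 : (0 : ℝ) ≤ q := Nat.cast_nonneg _
  have hd0 : (0 : ℝ) ≤ d := Nat.cast_nonneg _
  have h1 := hw_choose_ineq q N d (by omega)
  have hH' : (H : ℝ) ≤ d * C := by rw [hC]; exact_mod_cast hH
  have hsum : d * ((N - d) * (N - d + q).choose q) ≤ ∑ i ∈ Finset.range d, (N - i) * (N - i + q).choose q := by
    have := Finset.card_nsmul_le_sum (Finset.range d) (fun i => (N - i) * (N - i + q).choose q)
      ((N - d) * (N - d + q).choose q) (fun i hi => by
        have : i < d := by simpa using hi
        exact Nat.mul_le_mul (by omega) (Nat.choose_le_choose _ (by omega)))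
    simpa using this
  have hW2 : q * (d * ((N - d) * (N - d + q).choose q)) ≤ (q + 1) * W :=
    (Nat.mul_le_mul_left _ hsum).trans hW
  have hW3 : (q : ℝ) * (d * ((N - d) * C')) ≤ (q + 1) * W := by
    have : ((q * (d * ((N - d) * (N - d + q).choose q)) : ℕ) : ℝ) ≤ ((q + 1) * W : ℕ) := by
      exact_mod_cast hW2
    push_cast [Nat.cast_sub (show d ≤ N by omega)] at this
    exact this
  have h2 : ((N : ℝ) - (2 * q + 1) * d) * C ≤ (N - d) * C' := by
    have h3 : ((N : ℝ) - d) * ((N - 2 * d * q) * C) ≤ (N - d) * (N * C') :=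
      mul_le_mul_of_nonneg_left h1 (by linarith)
    have h4 : (N : ℝ) * (((N : ℝ) - (2 * q + 1) * d) * C) ≤ N * ((N - d) * C') := by
      have : 0 ≤ 2 * (d : ℝ) * d * q * C := by positivity
      nlinarith
    exact le_of_mul_le_mul_left h4 hN0
  have h5 : (q + 1) * κ ≤ q * ((N : ℝ) - (2 * q + 1) * d) := by
    have : (q + 1) * κ = q * N - (q + 1) * ((2 * q + 1) * Δ) := by
      rw [hκ]; field_simp
    rw [this]
    have : (q : ℝ) * ((2 * q + 1) * d) ≤ (q + 1) * ((2 * q + 1) * Δ) := by gcongr; linarith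
    linarith
  have h6 : (q + 1) * (κ * H) ≤ (q + 1) * W := by
    calc (q + 1) * (κ * H) ≤ (q + 1) * (κ * (d * C)) := by gcongr
      _ = ((q + 1) * κ) * (d * C) := by ring
      _ ≤ (q * ((N : ℝ) - (2 * q + 1) * d)) * (d * C) := by gcongr
      _ = q * (d * (((N : ℝ) - (2 * q + 1) * d) * C)) := by ring
      _ ≤ q * (d * ((N - d) * C')) := by gcongr
      _ ≤ _ := hW3
  exact le_of_mul_le_mul_left h6 (by positivity)

open MvPolynomial Filter in
lemma hw_main {r : ℕ} {S : Type*} [CommRing S] [IsDomain S] [Algebra ℂ S]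
    (π : MvPolynomial (Fin r) ℂ →ₐ[ℂ] S) (hπ : Function.Surjective π)
    (hπh : ∀ n p, π p = 0 → π (homogeneousComponent n p) = 0)
    (T : Finset (Fin r)) (q : ℕ) (hT : T.card = q + 1) (t0 : T)
    (hgen : ∀ x : Fin r → ℂ, (∀ p ∈ RingHom.ker π, eval x p = 0) → (∀ j ∈ T, x j = 0) → x = 0)
    (Δ : ℕ) (hΔ : 0 < Δ)
    (hH : Tendsto (fun n : ℕ => (Nat.factorial q : ℝ) * (Module.finrank ℂ
      ((homogeneousSubmodule (Fin r) ℂ n).map π.toLinearMap) : ℝ) / (n : ℝ) ^ q) atTop (nhds (Δ : ℝ)))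
    (N : ℕ) (hN : Δ < N) :
    ∃ B : Finset (Fin r →₀ ℕ), B ⊆ Finset.univ.finsuppAntidiag N ∧
      LinearIndepOn ℂ (fun a : Fin r →₀ ℕ => π (monomial a (1 : ℂ))) (B : Set (Fin r →₀ ℕ)) ∧
      Submodule.span ℂ ((fun a : Fin r →₀ ℕ => π (monomial a (1 : ℂ))) '' (B : Set (Fin r →₀ ℕ))) =
        (homogeneousSubmodule (Fin r) ℂ N).map π.toLinearMap ∧
      ((q : ℝ) / ((q : ℝ) + 1)) * (N : ℝ) * (Module.finrank ℂ
          ((homogeneousSubmodule (Fin r) ℂ N).map π.toLinearMap) : ℝ)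
        - (2 * (q : ℝ) + 1) * (Δ : ℝ) * (Module.finrank ℂ
          ((homogeneousSubmodule (Fin r) ℂ N).map π.toLinearMap) : ℝ)
        ≤ ((∑ a ∈ B, ∑ j ∈ T.erase t0, a j : ℕ) : ℝ) := by
  classical
  have hTc : Fintype.card T = q + 1 := by simpa using hT
  obtain ⟨D, hD1, hD⟩ := hw_nullst (RingHom.ker π) T hgen
  have hinj := hw_inj π hπh T q hT D hD1 hD Δ hΔ hH
  let _ : Algebra (MvPolynomial T ℂ) S :=
    (π.comp (rename (Subtype.val : T → Fin r))).toRingHom.toAlgebra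
  have hφ : ∀ a : MvPolynomial T ℂ, algebraMap (MvPolynomial T ℂ) S a = π (rename Subtype.val a) :=
    fun a => rfl
  have : IsScalarTower ℂ (MvPolynomial T ℂ) S := IsScalarTower.of_algebraMap_eq fun x => by
    rw [hφ]; simp
  have : FaithfulSMul (MvPolynomial T ℂ) S := (faithfulSMul_iff_algebraMap_injective _ _).2 hinj
  have : Module.Finite (MvPolynomial T ℂ) S := hw_finite π hπ hπh T D hD1 hD hφ
  obtain ⟨ℓ, d, hℓ, hli, hup⟩ := hw_struct π hπ hπh T q hT hφ
  let K : ℕ → Finset (Σ _ : Fin d, (T →₀ ℕ)) := fun N =>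
    Finset.univ.sigma (fun i => (Finset.univ : Finset T).finsuppAntidiag (N - i))
  let e : (Σ _ : Fin d, (T →₀ ℕ)) → S := fun k =>
    π (rename Subtype.val (monomial k.2 (1 : ℂ))) * (π ℓ) ^ (k.1 : ℕ)
  have hspan : ∀ N, d ≤ N → ∀ k ∈ K N, e k ∈
      Submodule.span ℂ ((fun a : Fin r →₀ ℕ => π (monomial a (1 : ℂ))) ''
        {a | a ∈ (Finset.univ.finsuppAntidiag N : Finset (Fin r →₀ ℕ)) ∧
          (N - k.1) - k.2 t0 ≤ ∑ j ∈ T.erase t0, a j}) := by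
    intro N hdN k hk
    have hk2 : k.2 ∈ (Finset.univ : Finset T).finsuppAntidiag (N - k.1) := (Finset.mem_sigma.1 hk).2
    have h1 : (ℓ ^ (k.1 : ℕ)).IsHomogeneous (k.1 : ℕ) := by simpa using hℓ.pow (k.1 : ℕ)
    have h2 := hw_mem_span π T t0 (ℓ ^ (k.1 : ℕ)) k.1 N (by have := k.1.2; omega) h1 k.2 hk2
    rw [map_pow] at h2
    exact h2
  have hcard : ∀ N, (K N).card = ∑ i ∈ Finset.range d, (N - i + q).choose q := by
    intro N
    rw [Finset.card_sigma, ← Fin.sum_univ_eq_sum_range (fun i => (N - i + q).choose q)]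
    exact Finset.sum_congr rfl fun i _ => hw_card q _ hTc
  have hlow : ∀ N, d ≤ N → ∑ i ∈ Finset.range d, (N - i + q).choose q ≤
      Module.finrank ℂ ((homogeneousSubmodule (Fin r) ℂ N).map π.toLinearMap) := by
    intro N hdN
    have h1 : LinearIndependent ℂ (fun k : K N => e k) := hli.comp _ Subtype.val_injective
    have h2 := finrank_span_eq_card h1
    rw [Fintype.card_coe, hcard] at h2
    rw [← h2]
    have := (hw_finrank (T := Fin r) N).2
    apply Submodule.finrank_mono
    rw [Submodule.span_le]
    rintro _ ⟨⟨k, hk⟩, rfl⟩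
    rw [← hw_span_hom]
    exact Submodule.span_mono (Set.image_mono fun a ha => ha.1) (hspan N hdN k hk)
  have hdΔ : d ≤ Δ := by
    have h1 : Tendsto (fun N : ℕ => ∑ i ∈ Finset.range d,
        (Nat.factorial q : ℝ) * ((N - i + q).choose q : ℝ) / (N : ℝ) ^ q) atTop
        (nhds (∑ i ∈ Finset.range d, (1 : ℝ))) := tendsto_finsetSum _ fun i _ => hw_tendsto q i
    have h2 := le_of_tendsto_of_tendsto h1 hH (by
      filter_upwards [eventually_ge_atTop d] with n hn
      rw [← Finset.sum_div, ← Finset.mul_sum]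
      gcongr
      exact_mod_cast hlow n hn)
    simp at h2
    exact h2
  obtain ⟨B, hBM, hBi, hBs, hBw⟩ := hw_exists_basis
    (Finset.univ.finsuppAntidiag N : Finset (Fin r →₀ ℕ))
    (fun a : Fin r →₀ ℕ => π (monomial a (1 : ℂ))) (fun a => ∑ j ∈ T.erase t0, a j) N
    (K N) e (fun k => (N - k.1) - k.2 t0) (fun k _ => by omega)
    (hli.comp _ Subtype.val_injective) (hspan N (by omega))
  refine ⟨B, hBM, hBi, hBs.trans (hw_span_hom π N), ?_⟩
  refine hw_numeric q N d Δ _ _ hdΔ hN (hup N) ?_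
  refine le_trans ?_ (Nat.mul_le_mul_left _ hBw)
  rw [Finset.sum_sigma, ← Fin.sum_univ_eq_sum_range (fun i => (N - i) * (N - i + q).choose q),
    Finset.mul_sum, Finset.mul_sum]
  refine Finset.sum_le_sum fun i _ => ?_
  have h1 := hw_sum q (N - i) hTc t0
  have h2 := hw_card q (N - i) hTc
  have h3 : ∑ m ∈ (Finset.univ : Finset T).finsuppAntidiag (N - i), ((N - i) - m t0) +
      ∑ m ∈ (Finset.univ : Finset T).finsuppAntidiag (N - i), m t0 = (N - i) * (N - i + q).choose q := by
    rw [← Finset.sum_add_distrib, mul_comm, ← h2, ← smul_eq_mul, ← Finset.sum_const]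
    refine Finset.sum_congr rfl fun m hm => ?_
    have : m t0 ≤ N - i := by
      rw [← (Finset.mem_finsuppAntidiag.1 hm).1]
      exact Finset.single_le_sum (f := fun t => m t) (fun _ _ => Nat.zero_le _) (Finset.mem_univ _)
    omega
  have h4 := congrArg (fun z => (q + 1) * z) h3
  simp only [mul_add] at h4
  rw [h1] at h4
  refine le_of_eq ?_
  change _ = (q + 1) * ∑ m ∈ (Finset.univ : Finset T).finsuppAntidiag (N - i), ((N - i) - m t0)
  linarith

/-- **the key Hilbert-weight estimate in the proof of Theorem 1.7.**
Let `Y ⊂ ℙ^{r−1}` be a subvariety over `ℂ` of dimension `q` and degree `Δ` (with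
homogeneous prime ideal `I_Y`) such that for every subset `{i_0,…,i_q} ⊂ {1,…,r}` of
size `q+1` one has `Y ∩ {y_{i_0} = 0, …, y_{i_q} = 0} = ∅`.  Let `c⃗ ∈ {0,1}^r` be a
vector with exactly `q` entries equal to `1`.  Then for every integer `N > Δ`:
`S_Y(N, c⃗) ≥ (q/(q+1))·N·H_Y(N) − (2q+1)·Δ·H_Y(N)`, and consequently
`(1/q)·S_Y(N, c⃗) − (N/r)·H_Y(N) ≥ (1/(q+1) − 1/r)·N·H_Y(N) − ((2q+1)Δ/q)·H_Y(N)`. -/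
theorem hilbert_weight_general_position_estimate
    (r q : ℕ) (hq : 1 ≤ q) (hr : q + 1 ≤ r)
    (I : Ideal (MvPolynomial (Fin r) ℂ))
    (hIhom : ∀ p ∈ I, ∀ j : ℕ, MvPolynomial.homogeneousComponent j p ∈ I)
    (hIprime : I.IsPrime)
    (Δ : ℕ) (hΔ : 0 < Δ)
    (hHilb : Tendsto (fun m : ℕ => (Nat.factorial q : ℝ) * (hilbertFn I m : ℝ) / (m : ℝ) ^ q)
      atTop (nhds (Δ : ℝ)))
    (hgen : ∀ s : Finset (Fin r), s.card = q + 1 →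
      ∀ x : Fin r → ℂ, (∀ p ∈ I, MvPolynomial.eval x p = 0) →
        (∀ j ∈ s, x j = 0) → x = 0)
    (c : Fin r → ℝ) (hc01 : ∀ i, c i = 0 ∨ c i = 1)
    (hcq : (Finset.univ.filter fun i => c i = 1).card = q) :
    ∀ N : ℕ, Δ < N →
      ((q : ℝ) / ((q : ℝ) + 1)) * (N : ℝ) * (hilbertFn I N : ℝ)
          - (2 * (q : ℝ) + 1) * (Δ : ℝ) * (hilbertFn I N : ℝ)
        ≤ hilbertWeight I N c ∧
      (1 / ((q : ℝ) + 1) - 1 / (r : ℝ)) * (N : ℝ) * (hilbertFn I N : ℝ)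
          - ((2 * (q : ℝ) + 1) * (Δ : ℝ) / (q : ℝ)) * (hilbertFn I N : ℝ)
        ≤ (1 / (q : ℝ)) * hilbertWeight I N c - ((N : ℝ) / (r : ℝ)) * (hilbertFn I N : ℝ) := by
  classical
  intro N hN
  have hq0 : (0 : ℝ) < q := by exact_mod_cast hq
  have hr0 : (0 : ℝ) < r := by exact_mod_cast (by omega : 0 < r)
  have hmain : ((q : ℝ) / ((q : ℝ) + 1)) * (N : ℝ) * (hilbertFn I N : ℝ)
          - (2 * (q : ℝ) + 1) * (Δ : ℝ) * (hilbertFn I N : ℝ)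
        ≤ hilbertWeight I N c := by
    set J : Finset (Fin r) := Finset.univ.filter fun i => c i = 1 with hJ
    obtain ⟨t0, ht0⟩ : ∃ t0, t0 ∉ J := by
      by_contra hcon
      push Not at hcon
      have : J = Finset.univ := Finset.eq_univ_iff_forall.2 hcon
      rw [this, Finset.card_univ, Fintype.card_fin] at hcq
      omega
    have hTcard : (insert t0 J).card = q + 1 := by rw [Finset.card_insert_of_notMem ht0, hcq]
    have hdom : IsDomain (MvPolynomial (Fin r) ℂ ⧸ I) := Ideal.Quotient.isDomain I
    let π : MvPolynomial (Fin r) ℂ →ₐ[ℂ] (MvPolynomial (Fin r) ℂ ⧸ I) := Ideal.Quotient.mkₐ ℂ I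
    have hker : ∀ p, π p = 0 ↔ p ∈ I := fun p => Ideal.Quotient.eq_zero_iff_mem
    let E : (MvPolynomial (Fin r) ℂ ⧸ Submodule.restrictScalars ℂ I) ≃ₗ[ℂ] (MvPolynomial (Fin r) ℂ ⧸ I) :=
      Submodule.Quotient.restrictScalarsEquiv ℂ I
    have hE : ∀ p, E ((Submodule.restrictScalars ℂ I).mkQ p) = π p := fun p => rfl
    have hgp : ∀ n, (gradedPiece I n).map E.toLinearMap =
        (MvPolynomial.homogeneousSubmodule (Fin r) ℂ n).map π.toLinearMap := by
      intro n
      rw [gradedPiece, ← Submodule.map_comp]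
      rfl
    have hfr : ∀ n, Module.finrank ℂ
        ((MvPolynomial.homogeneousSubmodule (Fin r) ℂ n).map π.toLinearMap) = hilbertFn I n := by
      intro n
      rw [← hgp, hilbertFn]
      exact LinearEquiv.finrank_map_eq E _
    have hπh : ∀ n p, π p = 0 → π (MvPolynomial.homogeneousComponent n p) = 0 := by
      intro n p hp
      rw [hker] at hp ⊢
      exact hIhom p hp n
    obtain ⟨B, hBM, hBi, hBs, hBw⟩ := hw_main π Ideal.Quotient.mk_surjective hπh (insert t0 J) q hTcard
      ⟨t0, Finset.mem_insert_self _ _⟩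
      (fun x hx => hgen _ hTcard x fun p hp => hx p ((hker p).2 hp)) Δ hΔ
      (by simpa only [hfr] using hHilb) N hN
    rw [hfr] at hBw
    refine hBw.trans ?_
    rw [Finset.erase_insert ht0]
    have hbasis : IsMonomialBasis I N B := by
      refine ⟨fun a ha => (Finset.mem_finsuppAntidiag.1 (hBM ha)).1, ?_, ?_⟩
      · exact LinearIndependent.of_comp E.toLinearMap hBi
      · apply Submodule.map_injective_of_injective (f := E.toLinearMap) E.injective
        rw [hgp, ← hBs, Submodule.map_span, Set.image_image]
        rfl
    have hsum : ((∑ a ∈ B, ∑ j ∈ J, a j : ℕ) : ℝ) = ∑ a ∈ B, ∑ i, (a i : ℝ) * c i := by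
      push_cast
      refine Finset.sum_congr rfl fun a _ => ?_
      rw [hJ, Finset.sum_filter]
      refine Finset.sum_congr rfl fun i _ => ?_
      rcases hc01 i with h | h <;> simp [h]
    rw [hilbertWeight]
    refine le_csSup ?_ ⟨B, hbasis, hsum⟩
    refine Set.Finite.bddAbove (Set.Finite.subset
      (((Finset.univ.finsuppAntidiag N : Finset (Fin r →₀ ℕ)).powerset.image
        (fun A => ∑ a ∈ A, ∑ i, (a i : ℝ) * c i)).finite_toSet) ?_)
    rintro s ⟨A, hA, rfl⟩
    rw [Finset.mem_coe, Finset.mem_image]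
    refine ⟨A, Finset.mem_powerset.2 fun a ha => ?_, rfl⟩
    exact Finset.mem_finsuppAntidiag.2 ⟨hA.1 a ha, Finset.subset_univ _⟩
  refine ⟨hmain, ?_⟩
  have h2 := mul_le_mul_of_nonneg_left hmain (show (0 : ℝ) ≤ 1 / q by positivity)
  have h3 : (1 / ((q : ℝ) + 1) - 1 / (r : ℝ)) * (N : ℝ) * (hilbertFn I N : ℝ)
          - ((2 * (q : ℝ) + 1) * (Δ : ℝ) / (q : ℝ)) * (hilbertFn I N : ℝ) =
      1 / (q : ℝ) * (((q : ℝ) / ((q : ℝ) + 1)) * (N : ℝ) * (hilbertFn I N : ℝ)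
          - (2 * (q : ℝ) + 1) * (Δ : ℝ) * (hilbertFn I N : ℝ)) - ((N : ℝ) / (r : ℝ)) * (hilbertFn I N : ℝ) := by
    field_simp
    ring
  rw [h3]
  linarith
end

section
/- Let D be an essentially very large effective divisor on a nonsingular projective variety X, both defined over K, and let V ⊆ L(D) be a linear subspace witnessing essential very largeness. Then there exists a finite subset J of V such that for every P ∈ Supp D(K̄) there exists a subset I ⊆ J which is a basis of V and satisfies ord_E ∏_{f∈I} f > 0 for every irreducible component E of D with P ∈ E(K̄). -/
open scoped BigOperators

/-- Abstract interface for a nonsingular projective variety defined over `K`: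
`Point` is the set of points of `X` over the algebraic closure `K̄`, `Prime` the set of
prime divisors of `X` (the irreducible codimension-one subvarieties), `F` the field of
rational functions of `X` (an extension of `K`), `ord E f` the order of vanishing of
the nonzero rational function `f` along the prime divisor `E`, and `memPt P E` the
incidence relation "the point `P` lies on `E(K̄)`"; `dim` is the dimension of `X`. -/
structure AbstractVariety (K : Type) [Field K] : Type 1 where
  Point : Type
  Prime : Type
  F : Type
  fieldF : Field F
  algF : Algebra K F
  ord : Prime → F → ℤ
  memPt : Point → Prime → Prop
  dim : ℕ

attribute [instance] AbstractVariety.fieldF AbstractVariety.algF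

namespace AbstractVariety

variable {K : Type} [Field K] (X : AbstractVariety K)

/-- An effective divisor on `X`: a finitely supported assignment of multiplicities in
`ℕ` to the prime divisors.  An irreducible component of `D` is a prime divisor `E`
with `D E > 0`. -/
abbrev Div := X.Prime →₀ ℕ

/-- The point `P` lies in the support `D(K̄)` of the effective divisor `D`. -/
def inSupp (D : X.Div) (P : X.Point) : Prop := ∃ E, 0 < D E ∧ X.memPt P E

/-- Membership in the Riemann–Roch space
`L(D) = {f rational function on X | div(f) ≥ -D} ∪ {0}`. -/
def memL (D : X.Div) (f : X.F) : Prop := f = 0 ∨ ∀ E, -(D E : ℤ) ≤ X.ord E f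

/-- `B` is a (finite) basis of the `K`-vector space `L(D)`: a linearly independent
subset of `L(D)` which spans `L(D)`. -/
def IsBasisOfL (D : X.Div) (B : Finset X.F) : Prop :=
  (∀ f ∈ B, X.memL D f) ∧ LinearIndependent (ι := (B : Set X.F)) K Subtype.val ∧
    ∀ f, X.memL D f → f ∈ Submodule.span K (B : Set X.F)

/-- `B` is a (finite) basis of the subspace `V`. -/
def IsBasisOf (V : Submodule K X.F) (B : Finset X.F) : Prop :=
  (B : Set X.F) ⊆ (V : Set X.F) ∧ LinearIndependent (ι := (B : Set X.F)) K Subtype.val ∧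
    Submodule.span K (B : Set X.F) = V

/-- Levin's definition: `D` is *very large* if for every `P ∈ D(K̄)` there exists a
basis `B` of `L(D)` such that `ord_E ∏_{f ∈ B} f > 0` for every irreducible component
`E` of `D` with `P ∈ E(K̄)`. -/
def IsVeryLarge (D : X.Div) : Prop :=
  ∀ P : X.Point, X.inSupp D P → ∃ B : Finset X.F, X.IsBasisOfL D B ∧
    ∀ E, 0 < D E → X.memPt P E → 0 < X.ord E (∏ f ∈ B, f)

/-- `D` is *large* if it has the same support as some very large divisor. -/
def IsLarge (D : X.Div) : Prop :=
  ∃ D' : X.Div, (∀ E, 0 < D E ↔ 0 < D' E) ∧ X.IsVeryLarge D'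

/-- `D` is *essentially very large* if there exists a linear subspace `V` of `L(D)`
such that for every `P ∈ D(K̄)` there exists a basis `B` of `V` such that
`ord_E ∏_{f ∈ B} f > 0` for every irreducible component `E` of `D` with `P ∈ E(K̄)`. -/
def IsEssentiallyVeryLarge (D : X.Div) : Prop :=
  ∃ V : Submodule K X.F, (∀ f ∈ V, X.memL D f) ∧
    ∀ P : X.Point, X.inSupp D P → ∃ B : Finset X.F, X.IsBasisOf V B ∧
      ∀ E, 0 < D E → X.memPt P E → 0 < X.ord E (∏ f ∈ B, f)

/-- `D` is *essentially large* if it has the same support as some essentially very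
large divisor. -/
def IsEssentiallyLarge (D : X.Div) : Prop :=
  ∃ D' : X.Div, (∀ E, 0 < D E ↔ 0 < D' E) ∧ X.IsEssentiallyVeryLarge D'

end AbstractVariety

/-- Let `D` be an essentially very large effective divisor on a
nonsingular projective variety `X`, both defined over `K` (a number field or `ℂ`), and
let `V ⊆ L(D)` be a linear subspace witnessing essential very largeness.  Then there
exists a finite subset `J` of `V` such that for every `P ∈ Supp D(K̄)` there exists a
subset `I ⊆ J` which is a basis of `V` and satisfies `ord_E ∏_{f ∈ I} f > 0` for every
irreducible component `E` of `D` with `P ∈ E(K̄)`. -/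
theorem finite_family_of_bases (K : Type) [Field K]
    (hK : NumberField K ∨ Nonempty (K ≃+* ℂ))
    (X : AbstractVariety K) (D : X.Div) (V : Submodule K X.F)
    (hV : ∀ f ∈ V, X.memL D f)
    (hwitness : ∀ P : X.Point, X.inSupp D P → ∃ B : Finset X.F, X.IsBasisOf V B ∧
      ∀ E, 0 < D E → X.memPt P E → 0 < X.ord E (∏ f ∈ B, f)) :
    ∃ J : Finset X.F, (J : Set X.F) ⊆ (V : Set X.F) ∧
      ∀ P : X.Point, X.inSupp D P → ∃ I : Finset X.F, I ⊆ J ∧ X.IsBasisOf V I ∧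
        ∀ E, 0 < D E → X.memPt P E → 0 < X.ord E (∏ f ∈ I, f) := by
  classical
  -- `P` matters only through the (finite) set of components of `D` passing through it.
  let good : Finset X.Prime → Finset X.F → Prop := fun S B =>
    X.IsBasisOf V B ∧ ∀ E ∈ S, 0 < X.ord E (∏ f ∈ B, f)
  let c : Finset X.Prime → Finset X.F := fun S =>
    if h : ∃ B, good S B then h.choose else ∅
  have hc : ∀ S, (∃ B, good S B) → good S (c S) := by
    intro S h
    simp only [c, dif_pos h]
    exact h.choose_spec
  refine ⟨D.support.powerset.biUnion c, ?_, ?_⟩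
  · intro f hf
    obtain ⟨S, -, hfS⟩ := Finset.mem_biUnion.mp (Finset.mem_coe.mp hf)
    by_cases h : ∃ B, good S B
    · exact (hc S h).1.1 (Finset.mem_coe.mpr hfS)
    · simp [c, dif_neg h] at hfS
  · intro P hP
    obtain ⟨B, hB, hord⟩ := hwitness P hP
    let S : Finset X.Prime := D.support.filter (fun E => X.memPt P E)
    have hS : good S (c S) := by
      refine hc S ⟨B, hB, fun E hE => ?_⟩
      obtain ⟨h1, h2⟩ := Finset.mem_filter.mp hE
      exact hord E (Nat.pos_of_ne_zero (Finsupp.mem_support_iff.mp h1)) h2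
    refine ⟨c S, Finset.subset_biUnion_of_mem c
      (Finset.mem_powerset.mpr (Finset.filter_subset _ _)), hS.1, fun E hE hPE => ?_⟩
    exact hS.2 E (Finset.mem_filter.mpr ⟨Finsupp.mem_support_iff.mpr hE.ne', hPE⟩)
end
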